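/- Let A satisfy (H1), β_1,...,β_n > -2, and let u = (u_1,...,u_n) be a (not necessarily radial) solution of the singular Liouville system with energy σ. Set m_i = Σ_{j=1}^n a_{ij} σ_j. Then m_i > 2 + β_i for every i ∈ I, and there exist constants c_1,...,c_n ∈ ℝ and δ > 0 such that for |x| > 1: u_i(x) = -m_i log|x| + c_i + O(|x|^{-δ}) and ∇u_i(x) = -m_i x/|x|² + O(|x|^{-δ-1}) for every i ∈ I. -/

import Mathlib

open Set MeasureTheory

/-- Hypothesis (H1): symmetric, nonnegative entries, irreducible, invertible. -/
def H1 {n : ℕ} (A : Matrix (Fin n) (Fin n) ℝ) : Prop :=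
  A.IsSymm ∧ (∀ i j, 0 ≤ A i j) ∧
  (∀ S : Finset (Fin n), S.Nonempty → S ≠ Finset.univ → ∃ i ∈ S, ∃ j ∈ Sᶜ, A i j ≠ 0) ∧
  IsUnit A.det

/-- The Euclidean norm on ℝ². -/
noncomputable def nrm (x : ℝ × ℝ) : ℝ := Real.sqrt (x.1 ^ 2 + x.2 ^ 2)

/-- The Laplacian on ℝ²: sum of the two second partial derivatives. -/
noncomputable def lap (u : ℝ × ℝ → ℝ) (x : ℝ × ℝ) : ℝ :=
  deriv (deriv (fun s => u (s, x.2))) x.1 + deriv (deriv (fun t => u (x.1, t))) x.2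

/-- Solution (not necessarily radial) of the singular Liouville system on ℝ²
with the finite-energy condition. -/
def PDESolution {n : ℕ} (A : Matrix (Fin n) (Fin n) ℝ) (β : Fin n → ℝ)
    (u : Fin n → ℝ × ℝ → ℝ) : Prop :=
  (∀ i, Continuous (u i)) ∧
  (∀ i, ∀ x : ℝ × ℝ, x ≠ 0 → ContDiffAt ℝ 2 (u i) x) ∧
  (∀ i, ∀ x : ℝ × ℝ, x ≠ 0 →
      lap (u i) x + ∑ j, A i j * nrm x ^ β j * Real.exp (u j x) = 0) ∧
  (∀ i, Integrable (fun x : ℝ × ℝ => nrm x ^ β i * Real.exp (u i x)))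

/-- Energy of a solution: σ_i = (1/(2π)) ∫_{ℝ²} |x|^{β_i} e^{u_i(x)} dx. -/
noncomputable def energyPDE {n : ℕ} (β : Fin n → ℝ) (u : Fin n → ℝ × ℝ → ℝ) (i : Fin n) : ℝ :=
  (1 / (2 * Real.pi)) * ∫ x : ℝ × ℝ, nrm x ^ β i * Real.exp (u i x)

/-- log-polar map -/
noncomputable def Ph (z : ℝ × ℝ) : ℝ × ℝ := (Real.exp z.1 * Real.cos z.2, Real.exp z.1 * Real.sin z.2)

theorem Ph_mk (a b : ℝ) : Ph (a, b) = (Real.exp a * Real.cos b, Real.exp a * Real.sin b) := rfl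

theorem curve2 {G : ℝ × ℝ → ℝ} {γ γ' : ℝ → ℝ × ℝ} {t0 : ℝ} {γ'' : ℝ × ℝ}
    (hG : ContDiffAt ℝ 2 G (γ t0)) (h1 : ∀ t, HasDerivAt γ (γ' t) t)
    (h2 : HasDerivAt γ' γ'' t0) :
    deriv (deriv (fun t => G (γ t))) t0
      = fderiv ℝ (fderiv ℝ G) (γ t0) (γ' t0) (γ' t0) + fderiv ℝ G (γ t0) γ'' := by
  have hc : ContinuousAt γ t0 := (h1 t0).continuousAt
  have hev : ∀ᶠ t in nhds t0, ContDiffAt ℝ 2 G (γ t) :=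
    hc.eventually (hG.eventually (by simp))
  have hd : deriv (fun t => G (γ t)) =ᶠ[nhds t0] fun t => fderiv ℝ G (γ t) (γ' t) := by
    filter_upwards [hev] with t ht
    exact ((ht.differentiableAt (by norm_num)).hasFDerivAt.comp_hasDerivAt t (h1 t)).deriv
  rw [hd.deriv_eq]
  have hF : DifferentiableAt ℝ (fderiv ℝ G) (γ t0) :=
    (hG.fderiv_right (m := 1) (by norm_num)).differentiableAt (by norm_num)
  have h3 := (hF.hasFDerivAt.comp_hasDerivAt t0 (h1 t0)).clm_apply h2
  exact h3.deriv

theorem lap_eq {G : ℝ × ℝ → ℝ} {x : ℝ × ℝ} (hG : ContDiffAt ℝ 2 G x) :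
    lap G x = fderiv ℝ (fderiv ℝ G) x (1, 0) (1, 0) + fderiv ℝ (fderiv ℝ G) x (0, 1) (0, 1) := by
  unfold lap
  have e1 := curve2 (G := G) (γ := fun s => (s, x.2)) (γ' := fun _ => (1, 0)) (t0 := x.1)
    (γ'' := 0) hG (fun t => (hasDerivAt_id t).prodMk (hasDerivAt_const t x.2))
    (hasDerivAt_const _ _)
  have e2 := curve2 (G := G) (γ := fun s => (x.1, s)) (γ' := fun _ => (0, 1)) (t0 := x.2)
    (γ'' := 0) hG (fun t => (hasDerivAt_const t x.1).prodMk (hasDerivAt_id t))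
    (hasDerivAt_const _ _)
  rw [e1, e2]; simp

theorem lap_Ph {G : ℝ × ℝ → ℝ} (p z : ℝ × ℝ) (hG : ContDiffAt ℝ 2 G (p + Ph z)) :
    lap (fun z => G (p + Ph z)) z = Real.exp (2 * z.1) * lap G (p + Ph z) := by
  rw [lap_eq hG]
  unfold lap
  have a1 : ∀ t, HasDerivAt (fun s => p + Ph (s, z.2)) (Ph (t, z.2)) t := fun t => by
    simp only [Ph_mk]
    exact (((Real.hasDerivAt_exp t).mul_const _).prodMk ((Real.hasDerivAt_exp t).mul_const _)).const_add p
  have a2 : ∀ t, HasDerivAt (fun s => Ph (s, z.2)) (Ph (t, z.2)) t := fun t => by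
    simp only [Ph_mk]
    exact (((Real.hasDerivAt_exp t).mul_const _).prodMk ((Real.hasDerivAt_exp t).mul_const _))
  have b1 : ∀ t, HasDerivAt (fun s => p + Ph (z.1, s))
      (Real.exp z.1 * -Real.sin t, Real.exp z.1 * Real.cos t) t := fun t => by
    simp only [Ph_mk]
    exact (((Real.hasDerivAt_cos t).const_mul _).prodMk ((Real.hasDerivAt_sin t).const_mul _)).const_add p
  have b2 : HasDerivAt (fun t => (Real.exp z.1 * -Real.sin t, Real.exp z.1 * Real.cos t))
      (-Ph z) z.2 := by
    have := (((Real.hasDerivAt_sin z.2).neg.const_mul (Real.exp z.1)).prodMk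
      ((Real.hasDerivAt_cos z.2).const_mul (Real.exp z.1)))
    convert this using 1
    · simp
    · simp [Ph]
  have e1 := curve2 (G := G) (t0 := z.1) hG a1 (a2 _)
  have e2 := curve2 (G := G) (t0 := z.2) hG b1 b2
  rw [e1, e2]
  set D := fderiv ℝ (fderiv ℝ G) (p + Ph z) with hD
  have hb : ∀ a b : ℝ, D (a, b) (a, b) = a * a * D (1,0) (1,0) + a * b * D (1,0) (0,1)
      + a * b * D (0,1) (1,0) + b * b * D (0,1) (0,1) := by
    intro a b
    have : ((a, b) : ℝ × ℝ) = a • (1, 0) + b • (0, 1) := by simp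
    rw [this]
    simp only [map_add, map_smul, add_apply, smul_apply,
      smul_eq_mul]
    ring
  have hz : (z.1, z.2) = z := rfl
  simp only [hz]
  rw [hb (Real.exp z.1 * -Real.sin z.2), map_neg]
  rw [show D (Ph z) (Ph z) = _ from hb _ _]
  rw [show (2 * z.1) = z.1 + z.1 by ring, Real.exp_add]
  have := Real.sin_sq_add_cos_sq z.2
  linear_combination (Real.exp z.1 ^ 2 * (D (1,0) (1,0) + D (0,1) (0,1))) * this

theorem contDiff_Ph : ContDiff ℝ 2 Ph := by
  unfold Ph
  fun_prop

/-- second derivative test -/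
theorem second_deriv_le {g : ℝ → ℝ} {a : ℝ} (hg : ContDiff ℝ 2 g) (hm : IsLocalMax g a) :
    deriv (deriv g) a ≤ 0 := by
  by_contra h
  push Not at h
  have h0 : deriv g a = 0 := hm.deriv_eq_zero
  have hmin := isLocalMin_of_deriv_deriv_pos h h0 hg.continuous.continuousAt
  have hconst : g =ᶠ[nhds a] fun _ => g a := by
    filter_upwards [hm, hmin] with x h1 h2
    exact le_antisymm h1 h2
  have : deriv g =ᶠ[nhds a] fun _ => 0 := by
    have := hconst.deriv
    simpa using this
  rw [this.deriv_eq] at h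
  simp at h

theorem lap_le_of_max {g : ℝ × ℝ → ℝ} {x : ℝ × ℝ} (hg : ContDiff ℝ 2 g) (hm : IsLocalMax g x) :
    lap g x ≤ 0 := by
  unfold lap
  have h1 : IsLocalMax (fun s => g (s, x.2)) x.1 :=
    (show Filter.Tendsto (fun s : ℝ => (s, x.2)) (nhds x.1) (nhds x) from
      (by fun_prop : Continuous (fun s : ℝ => (s, x.2))).tendsto x.1).eventually hm
  have h2 : IsLocalMax (fun s => g (x.1, s)) x.2 :=
    (show Filter.Tendsto (fun s : ℝ => (x.1, s)) (nhds x.2) (nhds x) from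
      (by fun_prop : Continuous (fun s : ℝ => (x.1, s))).tendsto x.2).eventually hm
  have := second_deriv_le (by fun_prop) h1
  have := second_deriv_le (by fun_prop) h2
  linarith

/-- maximum principle on a rectangle -/
theorem max_principle {g : ℝ × ℝ → ℝ} (hg : ContDiff ℝ 2 g) {a b c d : ℝ}
    (hlap : ∀ s t, a < s → s < b → c < t → t < d → 0 < lap g (s, t))
    (hl : ∀ t, c ≤ t → t ≤ d → g (a, t) ≤ 0) (hr : ∀ t, c ≤ t → t ≤ d → g (b, t) ≤ 0)
    (hb : ∀ s, a ≤ s → s ≤ b → g (s, c) ≤ 0) (ht : ∀ s, a ≤ s → s ≤ b → g (s, d) ≤ 0)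
    {s t : ℝ} (hs1 : a ≤ s) (hs2 : s ≤ b) (ht1 : c ≤ t) (ht2 : t ≤ d) : g (s, t) ≤ 0 := by
  have hK : IsCompact (Icc a b ×ˢ Icc c d : Set (ℝ × ℝ)) := isCompact_Icc.prod isCompact_Icc
  obtain ⟨⟨s0, t0⟩, ⟨⟨h1, h2⟩, ⟨h3, h4⟩⟩, hmax⟩ :=
    hK.exists_isMaxOn ⟨(s, t), ⟨⟨hs1, hs2⟩, ⟨ht1, ht2⟩⟩⟩ hg.continuous.continuousOn
  dsimp only at h1 h2 h3 h4
  refine le_trans (hmax (show (s, t) ∈ _ from ⟨⟨hs1, hs2⟩, ⟨ht1, ht2⟩⟩)) ?_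
  rcases h1.eq_or_lt with rfl | h1'
  · exact hl _ h3 h4
  rcases h2.eq_or_lt with rfl | h2'
  · exact hr _ h3 h4
  rcases h3.eq_or_lt with rfl | h3'
  · exact hb _ h1 h2
  rcases h4.eq_or_lt with rfl | h4'
  · exact ht _ h1 h2
  exfalso
  have hn : (Icc a b ×ˢ Icc c d : Set (ℝ × ℝ)) ∈ nhds (s0, t0) :=
    prod_mem_nhds (Icc_mem_nhds h1' h2') (Icc_mem_nhds h3' h4')
  have := lap_le_of_max hg (hmax.isLocalMax hn)
  linarith [hlap s0 t0 h1' h2' h3' h4']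

theorem lap_sub {g h : ℝ × ℝ → ℝ} (hg : ContDiff ℝ 2 g) (hh : ContDiff ℝ 2 h) (x : ℝ × ℝ) :
    lap (fun z => g z - h z) x = lap g x - lap h x := by
  have key : ∀ p q : ℝ → ℝ, ContDiff ℝ 2 p → ContDiff ℝ 2 q → ∀ s,
      deriv (deriv (fun t => p t - q t)) s = deriv (deriv p) s - deriv (deriv q) s := by
    intro p q hp hq s
    have e : deriv (fun t => p t - q t) = fun t => deriv p t - deriv q t := by
      ext t
      exact deriv_fun_sub (hp.differentiable (by norm_num) t) (hq.differentiable (by norm_num) t)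
    have hp' : Differentiable ℝ (deriv p) :=
      ((contDiff_succ_iff_deriv (n := 1)).1 hp).2.2.differentiable (by norm_num)
    have hq' : Differentiable ℝ (deriv q) :=
      ((contDiff_succ_iff_deriv (n := 1)).1 hq).2.2.differentiable (by norm_num)
    rw [e]
    exact deriv_fun_sub (hp' s) (hq' s)
  unfold lap
  rw [key _ _ (by fun_prop) (by fun_prop), key _ _ (by fun_prop) (by fun_prop)]
  ring

theorem deriv2_eq {g g' : ℝ → ℝ} {s c : ℝ} (h1 : ∀ t, HasDerivAt g (g' t) t)
    (h2 : HasDerivAt g' c s) : deriv (deriv g) s = c := by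
  rw [show deriv g = g' from funext fun t => (h1 t).deriv]
  exact h2.deriv

theorem lap_neg {g : ℝ × ℝ → ℝ} (x : ℝ × ℝ) :
    lap (fun z => - g z) x = - lap g x := by
  unfold lap
  have : ∀ p : ℝ → ℝ, deriv (deriv (fun t => - p t)) = fun t => - deriv (deriv p) t := by
    intro p
    rw [deriv.fun_neg']
    ext t
    exact deriv.fun_neg
  rw [this, this]; ring

theorem lap_reflect {H : ℝ × ℝ → ℝ} (c d : ℝ) (z : ℝ × ℝ) :
    lap (fun z => H (d + z.1, c - z.2)) z = lap H (d + z.1, c - z.2) := by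
  unfold lap
  have h2 : ∀ f : ℝ → ℝ, deriv (deriv (fun t => f (c - t))) z.2 = deriv (deriv f) (c - z.2) := by
    intro f
    have : deriv (fun t => f (c - t)) = fun t => - (deriv f) (c - t) := by
      ext t; exact deriv_comp_const_sub _ _ _
    rw [this, deriv.fun_neg, deriv_comp_const_sub]; simp
  have h1 : ∀ f : ℝ → ℝ, deriv (deriv (fun t => f (d + t))) z.1 = deriv (deriv f) (d + z.1) := by
    intro f
    have : deriv (fun t => f (d + t)) = fun t => (deriv f) (d + t) := by
      ext t; exact deriv_comp_const_add _ _ _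
    rw [this, deriv_comp_const_add]
  have e1 := h1 (fun s => H (s, c - z.2))
  have e2 := h2 (fun s => H (d + z.1, s))
  dsimp only at e1 e2 ⊢
  rw [e1, e2]

theorem lap_shift {H : ℝ × ℝ → ℝ} (c d : ℝ) (z : ℝ × ℝ) :
    lap (fun z => H (d + z.1, c + z.2)) z = lap H (d + z.1, c + z.2) := by
  unfold lap
  have h1 : ∀ (f : ℝ → ℝ) (d s : ℝ),
      deriv (deriv (fun t => f (d + t))) s = deriv (deriv f) (d + s) := by
    intro f d s
    have : deriv (fun t => f (d + t)) = fun t => (deriv f) (d + t) := by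
      ext t; exact deriv_comp_const_add _ _ _
    rw [this, deriv_comp_const_add]
  have e1 := h1 (fun s => H (s, c + z.2)) d z.1
  have e2 := h1 (fun s => H (d + z.1, s)) c z.2
  dsimp only at e1 e2 ⊢
  rw [e1, e2]

theorem lap_barrier (K ε δ θ0 : ℝ) (z : ℝ × ℝ) :
    lap (fun z : ℝ × ℝ => (K * Real.exp (-δ * z.1) + ε * Real.exp (1 / 2 * z.1)) *
      (1 + (z.2 - θ0) * (θ0 + Real.pi - z.2))) z
    = (K * δ ^ 2 * Real.exp (-δ * z.1) + ε / 4 * Real.exp (1 / 2 * z.1)) *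
      (1 + (z.2 - θ0) * (θ0 + Real.pi - z.2))
      - 2 * (K * Real.exp (-δ * z.1) + ε * Real.exp (1 / 2 * z.1)) := by
  unfold lap
  have hexp : ∀ a t : ℝ, HasDerivAt (fun s => Real.exp (a * s)) (a * Real.exp (a * t)) t := by
    intro a t
    have := ((hasDerivAt_id t).const_mul a).exp
    simpa [mul_comm] using this
  have e1 := deriv2_eq (s := z.1) (g := fun s : ℝ => (K * Real.exp (-δ * s) + ε * Real.exp (1 / 2 * s)) *
      (1 + (z.2 - θ0) * (θ0 + Real.pi - z.2)))
      (fun t => (((hexp (-δ) t).const_mul K).add ((hexp (1/2) t).const_mul ε)).mul_const _)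
      (((((hexp (-δ) z.1).const_mul (-δ)).const_mul K).add
        (((hexp (1/2) z.1).const_mul (1/2)).const_mul ε)).mul_const _)
  have e2 := deriv2_eq (s := z.2) (c := (K * Real.exp (-δ * z.1) + ε * Real.exp (1 / 2 * z.1)) * (-2))
      (g := fun s : ℝ => (K * Real.exp (-δ * z.1) + ε * Real.exp (1 / 2 * z.1)) *
      (1 + (s - θ0) * (θ0 + Real.pi - s)))
      (g' := fun s : ℝ => (K * Real.exp (-δ * z.1) + ε * Real.exp (1 / 2 * z.1)) *
        (2 * θ0 + Real.pi - 2 * s))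
      (fun t => by
        have := ((((hasDerivAt_id t).sub_const θ0).mul
          ((hasDerivAt_id t).const_sub (θ0 + Real.pi))).const_add 1).const_mul
          (K * Real.exp (-δ * z.1) + ε * Real.exp (1 / 2 * z.1))
        refine this.congr_deriv ?_
        simp only [id]; ring)
      (by
        have := (((hasDerivAt_id z.2).const_mul 2).const_sub (2 * θ0 + Real.pi)).const_mul
          (K * Real.exp (-δ * z.1) + ε * Real.exp (1 / 2 * z.1))
        refine this.congr_deriv ?_
        ring)
  dsimp only at e1 e2 ⊢
  rw [e1, e2]
  ring

theorem exists_big (C ε a : ℝ) (hε : 0 < ε) : ∃ T, a ≤ T ∧ C * (1 + |T|) ≤ ε * Real.exp (1 / 2 * T) := by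
  refine ⟨max (max a 0) (16 * |C| / ε + 16 * (|C| / ε)), le_trans (le_max_left _ _) (le_max_left _ _), ?_⟩
  set T := max (max a 0) (16 * |C| / ε + 16 * (|C| / ε))
  have h0 : 0 ≤ T := le_trans (le_max_right _ _) (le_max_left _ _)
  have h1 : 16 * |C| / ε + 16 * (|C| / ε) ≤ T := le_max_right _ _
  have h2 := Real.quadratic_le_exp_of_nonneg (x := 1 / 2 * T) (by positivity)
  rw [abs_of_nonneg h0]
  have h3 : 32 * |C| ≤ ε * T := by
    have : 16 * |C| / ε + 16 * (|C| / ε) = 32 * |C| / ε := by ring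
    rw [this, div_le_iff₀ hε] at h1
    linarith
  have h4 : C * (1 + T) ≤ |C| * (1 + T) := by gcongr; exact le_abs_self C
  have h5 : 0 ≤ |C| := abs_nonneg C
  have h6 : ε * (1 / 2 * T + (1/2 * T)^2 / 2) ≤ ε * Real.exp (1 / 2 * T) := by
    gcongr; linarith
  nlinarith [mul_le_mul_of_nonneg_right h3 h0]

theorem osc_half {H : ℝ × ℝ → ℝ} (hH : ContDiff ℝ 2 H)
    (hper : ∀ t θ, H (t, θ + 2 * Real.pi) = H (t, θ)) {T F δ C : ℝ} (hδ0 : 0 ≤ δ)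
    (hδ1 : δ ≤ 1 / 2) (hF : ∀ t θ, T ≤ t → |lap H (t, θ)| ≤ F * Real.exp (-δ * t))
    (hC : ∀ t θ, T ≤ t → |H (t, θ)| ≤ C * (1 + |t|)) :
    ∃ K, ∀ t θ0 s, T ≤ t → 0 ≤ s → s ≤ Real.pi →
      H (t, θ0 + s) - H (t, θ0 - s) ≤ K * Real.exp (-δ * t) := by
  have hF0 : 0 ≤ F := by
    have := (abs_nonneg _).trans (hF T 0 le_rfl)
    exact nonneg_of_mul_nonneg_left this (Real.exp_pos _)
  have hC0 : 0 ≤ C := by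
    have := (abs_nonneg _).trans (hC T 0 le_rfl)
    exact nonneg_of_mul_nonneg_left this (by positivity)
  set K := 2 * F + 2 * C * (1 + |T|) * Real.exp (δ * T) with hK
  have hK0 : 0 ≤ K := by positivity
  refine ⟨K * 4, ?_⟩
  intro t θ0 s ht hs0 hs1
  have hpi := Real.pi_lt_d2
  have hpi0 := Real.pi_pos
  have hq : ∀ r, 0 ≤ r → r ≤ Real.pi → 1 ≤ 1 + r * (Real.pi - r) ∧ 1 + r * (Real.pi - r) ≤ 7 / 2 := by
    intro r h1 h2
    constructor
    · nlinarith [mul_nonneg h1 (sub_nonneg.2 h2)]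
    · nlinarith [sq_nonneg (r - Real.pi / 2)]
  suffices h : ∀ ε > 0, H (t, θ0 + s) - H (t, θ0 - s) ≤
      (K * Real.exp (-δ * t) + ε * Real.exp (1/2 * t)) * 4 by
    refine le_of_forall_pos_le_add fun ε hε => ?_
    have := h (ε / (4 * Real.exp (1/2 * t))) (by positivity)
    refine this.trans (le_of_eq ?_)
    field_simp
  intro ε hε
  obtain ⟨T2, hT2, hT2'⟩ := exists_big (2 * C) ε t hε
  set ψ : ℝ × ℝ → ℝ := fun z : ℝ × ℝ => (K * Real.exp (-δ * z.1) + ε * Real.exp (1 / 2 * z.1)) *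
      (1 + (z.2 - θ0) * (θ0 + Real.pi - z.2)) with hψ
  set φ : ℝ × ℝ → ℝ := fun z => H z - H (0 + z.1, 2 * θ0 - z.2) with hφ
  have hR : ContDiff ℝ 2 (fun z : ℝ × ℝ => H (0 + z.1, 2 * θ0 - z.2)) := by fun_prop
  have hφc : ContDiff ℝ 2 φ := by fun_prop
  have hψc : ContDiff ℝ 2 ψ := by fun_prop
  have hE : ∀ r, 0 < K * Real.exp (-δ * r) + ε * Real.exp (1 / 2 * r) := fun r => by positivity
  have hφ2 : ∀ r w, T ≤ r → φ (r, w) ≤ 2 * C * (1 + |r|) := by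
    intro r w hr
    have h1 := abs_le.1 (hC r w hr)
    have h2 := abs_le.1 (hC r (2 * θ0 - w) hr)
    simp only [hφ, zero_add]
    linarith [h1.2, h2.1]
  have hψ1 : ∀ r w, θ0 ≤ w → w ≤ θ0 + Real.pi →
      K * Real.exp (-δ * r) + ε * Real.exp (1 / 2 * r) ≤ ψ (r, w) := by
    intro r w h1 h2
    have := (hq (w - θ0) (by linarith) (by linarith)).1
    have e : Real.pi - (w - θ0) = θ0 + Real.pi - w := by ring
    rw [e] at this
    exact le_mul_of_one_le_right (hE r).le this
  have key := max_principle (g := fun z => φ z - ψ z) (hφc.sub hψc) (a := T) (b := T2) (c := θ0)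
    (d := θ0 + Real.pi) ?_ ?_ ?_ ?_ ?_ (s := t) (t := θ0 + s) ht hT2 (by linarith) (by linarith)
  · have e1 : φ (t, θ0 + s) = H (t, θ0 + s) - H (t, θ0 - s) := by
      simp only [hφ, zero_add]; congr 3; ring
    have e2 : ψ (t, θ0 + s) ≤ (K * Real.exp (-δ * t) + ε * Real.exp (1/2 * t)) * 4 := by
      have h2 := (hq s hs0 hs1).2
      simp only [hψ]
      refine mul_le_mul_of_nonneg_left ?_ (hE t).le
      have : (θ0 + s - θ0) * (θ0 + Real.pi - (θ0 + s)) = s * (Real.pi - s) := by ring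
      rw [this]; linarith
    rw [← e1]; linarith
  · intro r w hr1 hr2 hw1 hw2
    rw [lap_sub hφc hψc, lap_barrier]
    have e1 : lap φ (r, w) = lap H (r, w) - lap H (r, 2 * θ0 - w) := by
      rw [hφ, lap_sub hH hR, lap_reflect]; simp
    rw [e1]
    have h1 := abs_le.1 (hF r w hr1.le)
    have h2 := abs_le.1 (hF r (2 * θ0 - w) hr1.le)
    obtain ⟨q1, q2⟩ := hq (w - θ0) (by linarith) (by linarith)
    have e : Real.pi - (w - θ0) = θ0 + Real.pi - w := by ring
    rw [e] at q1 q2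
    dsimp only
    set q := 1 + (w - θ0) * (θ0 + Real.pi - w)
    have k1 : K * δ ^ 2 * Real.exp (-δ * r) * q ≤ K * (1/4) * Real.exp (-δ * r) * (7/2) := by
      have : δ ^ 2 ≤ 1/4 := by nlinarith
      gcongr
    have k2 : ε / 4 * Real.exp (1 / 2 * r) * q ≤ ε / 4 * Real.exp (1 / 2 * r) * (7/2) := by
      gcongr
    have k3 : 2 * F * Real.exp (-δ * r) ≤ K * Real.exp (-δ * r) := by
      gcongr
      rw [hK]
      have : 0 ≤ 2 * C * (1 + |T|) * Real.exp (δ * T) := by positivity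
      linarith
    have k4 : 0 < ε * Real.exp (1 / 2 * r) := by positivity
    have k5 : 0 ≤ K * Real.exp (-δ * r) := by positivity
    have e4 : lap H (r, w) = lap H (r, w) := rfl
    linarith [h1.1, h2.2]
  · intro w h1 h2
    have a1 := hφ2 T w le_rfl
    have a2 := hψ1 T w h1 h2
    have a3 : 2 * C * (1 + |T|) ≤ K * Real.exp (-δ * T) := by
      rw [hK]
      have : Real.exp (δ * T) * Real.exp (-δ * T) = 1 := by
        rw [← Real.exp_add]; simp
      have h3 : 0 ≤ F * Real.exp (-δ * T) := by positivity
      rw [add_mul, mul_assoc (2 * C * (1 + |T|)), this]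
      linarith
    have a4 : 0 < ε * Real.exp (1 / 2 * T) := by positivity
    linarith
  · intro w h1 h2
    have a1 := hφ2 T2 w (ht.trans hT2)
    have a2 := hψ1 T2 w h1 h2
    have a4 : 0 ≤ K * Real.exp (-δ * T2) := by positivity
    linarith
  · intro r h1 h2
    have a2 := hψ1 r θ0 le_rfl (by linarith)
    have : φ (r, θ0) = 0 := by
      simp only [hφ, zero_add]; rw [show 2 * θ0 - θ0 = θ0 by ring]; simp
    linarith [hE r]
  · intro r h1 h2
    have a2 := hψ1 r (θ0 + Real.pi) (by linarith) le_rfl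
    have : φ (r, θ0 + Real.pi) = 0 := by
      simp only [hφ, zero_add]
      rw [show θ0 + Real.pi = 2 * θ0 - (θ0 + Real.pi) + 2 * Real.pi by ring, hper]
      rw [show 2 * θ0 - (2 * θ0 - (θ0 + Real.pi) + 2 * Real.pi) = 2 * θ0 - (θ0 + Real.pi) by ring]
      simp
    linarith [hE r]

theorem osc_decay {H : ℝ × ℝ → ℝ} (hH : ContDiff ℝ 2 H)
    (hper : ∀ t θ, H (t, θ + 2 * Real.pi) = H (t, θ)) {T F δ C : ℝ} (hδ0 : 0 ≤ δ)
    (hδ1 : δ ≤ 1 / 2) (hF : ∀ t θ, T ≤ t → |lap H (t, θ)| ≤ F * Real.exp (-δ * t))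
    (hC : ∀ t θ, T ≤ t → |H (t, θ)| ≤ C * (1 + |t|)) :
    ∃ K, 0 ≤ K ∧ ∀ t θ θ', T ≤ t → |θ - θ'| ≤ 2 * Real.pi →
      |H (t, θ) - H (t, θ')| ≤ K * Real.exp (-δ * t) := by
  obtain ⟨K1, h1⟩ := osc_half hH hper hδ0 hδ1 hF hC
  obtain ⟨K2, h2⟩ := osc_half (H := fun z => - H z) hH.neg (fun t θ => by simp [hper]) hδ0 hδ1
    (T := T) (F := F) (fun t θ ht => by rw [lap_neg, abs_neg]; exact hF t θ ht)
    (C := C) (fun t θ ht => by rw [abs_neg]; exact hC t θ ht)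
  have main : ∀ t θ θ', T ≤ t → θ' ≤ θ → θ - θ' ≤ 2 * Real.pi →
      |H (t, θ) - H (t, θ')| ≤ max (max K1 K2) 0 * Real.exp (-δ * t) := by
    intro t θ θ' ht h3 h4
    have a1 := h1 t ((θ + θ') / 2) ((θ - θ') / 2) ht (by linarith) (by linarith)
    have a2 := h2 t ((θ + θ') / 2) ((θ - θ') / 2) ht (by linarith) (by linarith)
    rw [show (θ + θ') / 2 + (θ - θ') / 2 = θ by ring,
      show (θ + θ') / 2 - (θ - θ') / 2 = θ' by ring] at a1 a2
    have b1 : K1 * Real.exp (-δ * t) ≤ max (max K1 K2) 0 * Real.exp (-δ * t) := by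
      gcongr; exact le_trans (le_max_left _ _) (le_max_left _ _)
    have b2 : K2 * Real.exp (-δ * t) ≤ max (max K1 K2) 0 * Real.exp (-δ * t) := by
      gcongr; exact le_trans (le_max_right _ _) (le_max_left _ _)
    rw [abs_le]; constructor <;> linarith
  refine ⟨max (max K1 K2) 0, le_max_right _ _, ?_⟩
  intro t θ θ' ht h
  rw [abs_le] at h
  rcases le_total θ' θ with h' | h'
  · exact main t θ θ' ht h' h.2
  · rw [abs_sub_comm]; exact main t θ' θ ht h' (by linarith)

theorem lap_barrier2 (M N : ℝ) (z : ℝ × ℝ) :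
    lap (fun z : ℝ × ℝ => M * (z.1 ^ 2 + z.2 * (2 - z.2)) + N * (z.2 * (1 - z.2))) z = - 2 * N := by
  unfold lap
  have e1 := deriv2_eq (s := z.1) (c := M * 2)
      (g := fun s : ℝ => M * (s ^ 2 + z.2 * (2 - z.2)) + N * (z.2 * (1 - z.2)))
      (g' := fun s => M * (2 * s))
      (fun t => by
        have := (((hasDerivAt_pow 2 t).add_const (z.2 * (2 - z.2))).const_mul M).add_const
          (N * (z.2 * (1 - z.2)))
        refine this.congr_deriv ?_
        ring)
      (by
        have := ((hasDerivAt_id z.1).const_mul 2).const_mul M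
        refine this.congr_deriv ?_
        ring)
  have e2 := deriv2_eq (s := z.2) (c := M * (-2) + N * (-2))
      (g := fun s : ℝ => M * (z.1 ^ 2 + s * (2 - s)) + N * (s * (1 - s)))
      (g' := fun s => M * (2 - 2 * s) + N * (1 - 2 * s))
      (fun t => by
        have := ((((hasDerivAt_id t).mul ((hasDerivAt_id t).const_sub 2)).const_add (z.1 ^ 2)).const_mul M).add
          (((hasDerivAt_id t).mul ((hasDerivAt_id t).const_sub 1)).const_mul N)
        refine this.congr_deriv ?_
        simp only [id]; ring)
      (by
        have := ((((hasDerivAt_id z.2).const_mul 2).const_sub 2).const_mul M).add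
          ((((hasDerivAt_id z.2).const_mul 2).const_sub 1).const_mul N)
        refine this.congr_deriv ?_
        ring)
  dsimp only at e1 e2 ⊢
  rw [e1, e2]; ring

theorem grad_half {H : ℝ × ℝ → ℝ} (hH : ContDiff ℝ 2 H) {x0 y0 M : ℝ} (hM : 0 < M)
    (h1 : ∀ x y, |x| ≤ 1 → |y| ≤ 1 → |H (x0 + x, y0 + y)| ≤ M)
    (h2 : ∀ x y, |x| ≤ 1 → |y| ≤ 1 → |lap H (x0 + x, y0 + y)| ≤ M) {y : ℝ} (hy0 : 0 ≤ y)
    (hy1 : y ≤ 1) : H (x0, y0 + y) - H (x0, y0 - y) ≤ 8 * M * y := by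
  set ψ : ℝ × ℝ → ℝ := fun z : ℝ × ℝ => (2 * M) * (z.1 ^ 2 + z.2 * (2 - z.2)) +
    (2 * M) * (z.2 * (1 - z.2)) with hψ
  set f1 : ℝ × ℝ → ℝ := fun z => H (x0 + z.1, y0 + z.2) with hf1
  set f2 : ℝ × ℝ → ℝ := fun z => H (x0 + z.1, y0 - z.2) with hf2
  have c1 : ContDiff ℝ 2 f1 := by fun_prop
  have c2 : ContDiff ℝ 2 f2 := by fun_prop
  have c3 : ContDiff ℝ 2 ψ := by fun_prop
  have b1 : ∀ x y, |x| ≤ 1 → |y| ≤ 1 → f1 (x, y) - f2 (x, y) ≤ 2 * M := by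
    intro x y hx hy
    have a1 := abs_le.1 (h1 x y hx hy)
    have a2 := abs_le.1 (h1 x (-y) hx (by rwa [abs_neg]))
    simp only [hf1, hf2, sub_eq_add_neg] at *
    linarith [a1.2, a2.1]
  have key := max_principle (g := fun z => (f1 z - f2 z) - ψ z) ((c1.sub c2).sub c3) (a := -1)
    (b := 1) (c := 0) (d := 1) ?_ ?_ ?_ ?_ ?_ (s := 0) (t := y) (by norm_num) (by norm_num) hy0 hy1
  · simp only [hf1, hf2, hψ, add_zero] at key
    nlinarith [mul_nonneg hM.le (mul_nonneg hy0 hy0)]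
  · intro s t hs1 hs2 ht1 ht2
    rw [lap_sub (c1.sub c2) c3, lap_sub c1 c2, lap_barrier2]
    have a1 := abs_le.1 (h2 s t (abs_le.2 ⟨by linarith, by linarith⟩) (abs_le.2 ⟨by linarith, by linarith⟩))
    have a2 := abs_le.1 (h2 s (-t) (abs_le.2 ⟨by linarith, by linarith⟩) (abs_le.2 ⟨by linarith, by linarith⟩))
    rw [hf1, hf2, lap_shift, lap_reflect]
    simp only [sub_eq_add_neg] at *
    linarith [a1.1, a2.2]
  · intro t ht1 ht2
    have := b1 (-1) t (by simp) (abs_le.2 ⟨by linarith, by linarith⟩)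
    have h3 : 2 * M ≤ ψ (-1, t) := by
      simp only [hψ]
      nlinarith [mul_nonneg hM.le (mul_nonneg ht1 (sub_nonneg.2 ht2)), mul_nonneg hM.le ht1]
    linarith
  · intro t ht1 ht2
    have := b1 1 t (by simp) (abs_le.2 ⟨by linarith, by linarith⟩)
    have h3 : 2 * M ≤ ψ (1, t) := by
      simp only [hψ]
      nlinarith [mul_nonneg hM.le (mul_nonneg ht1 (sub_nonneg.2 ht2)), mul_nonneg hM.le ht1]
    linarith
  · intro s hs1 hs2
    simp only [hf1, hf2, hψ, add_zero, sub_zero, sub_self, zero_mul, mul_zero, zero_sub]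
    have : 0 ≤ 2 * M * s ^ 2 := by positivity
    linarith
  · intro s hs1 hs2
    have := b1 s 1 (abs_le.2 ⟨by linarith, by linarith⟩) (by simp)
    have h3 : 2 * M ≤ ψ (s, 1) := by
      simp only [hψ]
      nlinarith [mul_nonneg hM.le (sq_nonneg s)]
    linarith

theorem grad_y {H : ℝ × ℝ → ℝ} (hH : ContDiff ℝ 2 H) {x0 y0 M : ℝ} (hM : 0 < M)
    (h1 : ∀ x y, |x| ≤ 1 → |y| ≤ 1 → |H (x0 + x, y0 + y)| ≤ M)
    (h2 : ∀ x y, |x| ≤ 1 → |y| ≤ 1 → |lap H (x0 + x, y0 + y)| ≤ M) :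
    |deriv (fun t => H (x0, t)) y0| ≤ 4 * M := by
  have hd : HasDerivAt (fun t => H (x0, t)) (deriv (fun t => H (x0, t)) y0) y0 :=
    ((by fun_prop : ContDiff ℝ 2 (fun t => H (x0, t))).differentiable (by norm_num) y0).hasDerivAt
  set D := deriv (fun t => H (x0, t)) y0
  have hk : HasDerivAt (fun y => H (x0, y0 + y) - H (x0, y0 - y)) (D - -D) 0 := by
    have a1 : HasDerivAt (fun y => H (x0, y0 + y)) D 0 := by
      have := HasDerivAt.comp_const_add (f := fun t => H (x0, t)) (f' := D) y0 0 (by simpa using hd)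
      exact this
    have a2 : HasDerivAt (fun y => H (x0, y0 - y)) (-D) 0 := by
      have := HasDerivAt.comp_const_sub (f := fun t => H (x0, t)) (f' := D) y0 0 (by simpa using hd)
      exact this
    exact a1.sub a2
  have hpos : ∀ y, 0 ≤ y → y ≤ 1 → |H (x0, y0 + y) - H (x0, y0 - y)| ≤ 8 * M * y := by
    intro y hy0 hy1
    have b1 := grad_half hH hM h1 h2 hy0 hy1
    have b2 := grad_half (H := fun z => - H z) hH.neg hM
      (fun x y hx hy => by rw [abs_neg]; exact h1 x y hx hy)
      (fun x y hx hy => by rw [lap_neg, abs_neg]; exact h2 x y hx hy) hy0 hy1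
    rw [abs_le]; constructor <;> linarith
  have := hk.le_of_lip' (C := 8 * M) (by positivity) (by
    filter_upwards [Icc_mem_nhds (show (-1 : ℝ) < 0 by norm_num) (show (0 : ℝ) < 1 by norm_num)] with y hy
    simp only [add_zero, sub_zero, sub_self, Real.norm_eq_abs]
    rcases le_total 0 y with h | h
    · rw [abs_of_nonneg h]; exact hpos y h hy.2
    · have := hpos (-y) (by linarith) (by linarith [hy.1])
      rw [abs_of_nonpos h, abs_sub_comm]
      simpa [sub_eq_add_neg] using this)
  rw [Real.norm_eq_abs, show D - -D = 2 * D by ring, abs_mul] at this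
  simp at this
  linarith

theorem grad_x {H : ℝ × ℝ → ℝ} (hH : ContDiff ℝ 2 H) {x0 y0 M : ℝ} (hM : 0 < M)
    (h1 : ∀ x y, |x| ≤ 1 → |y| ≤ 1 → |H (x0 + x, y0 + y)| ≤ M)
    (h2 : ∀ x y, |x| ≤ 1 → |y| ≤ 1 → |lap H (x0 + x, y0 + y)| ≤ M) :
    |deriv (fun t => H (t, y0)) x0| ≤ 4 * M :=
  grad_y (H := fun z => H (z.2, z.1)) (by fun_prop) hM (fun x y hx hy => h1 y x hy hx)
    (fun x y hx hy => by
      have := h2 y x hy hx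
      unfold lap at this ⊢
      rwa [add_comm] at this)

theorem hasDerivAt_param {K : ℝ × ℝ → ℝ} (hK : ContDiff ℝ 1 K) (a b t : ℝ) :
    HasDerivAt (fun t => ∫ θ in a..b, K (t, θ)) (∫ θ in a..b, fderiv ℝ K (t, θ) (1, 0)) t := by
  have hc : Continuous (fun z : ℝ × ℝ => fderiv ℝ K z (1, 0)) :=
    (hK.continuous_fderiv (by norm_num)).clm_apply continuous_const
  have hKc := hK.continuous
  obtain ⟨C, hC⟩ := (isCompact_Icc.prod isCompact_uIcc : IsCompact (Icc (t-1) (t+1) ×ˢ uIcc a b)).exists_bound_of_continuousOn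
    hc.continuousOn
  refine (intervalIntegral.hasDerivAt_integral_of_dominated_loc_of_deriv_le (bound := fun _ => C)
    (F := fun t θ => K (t, θ)) (F' := fun t θ => fderiv ℝ K (t, θ) (1, 0))
    (Icc_mem_nhds (show t - 1 < t by linarith) (show t < t + 1 by linarith)) ?_ ?_ ?_ ?_ ?_ ?_).2
  · exact Filter.Eventually.of_forall fun x =>
      (by fun_prop : Continuous fun θ => K (x, θ)).aestronglyMeasurable
  · exact (by fun_prop : Continuous fun θ => K (t, θ)).intervalIntegrable _ _
  · exact (hc.comp (by fun_prop : Continuous fun θ : ℝ => (t, θ))).aestronglyMeasurable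
  · refine Filter.Eventually.of_forall fun θ hθ x hx => hC (x, θ) ⟨hx, uIoc_subset_uIcc hθ⟩
  · simp
  · refine Filter.Eventually.of_forall fun θ hθ x hx => ?_
    exact ((hK.differentiable (by norm_num) (x, θ)).hasFDerivAt.comp_hasDerivAt x
      ((hasDerivAt_id x).prodMk (hasDerivAt_const x θ)))

/-- the circle mean (times `2π`) and its second derivative -/
theorem mean_deriv {H : ℝ × ℝ → ℝ} (hH : ContDiff ℝ 2 H)
    (hper : ∀ t θ, H (t, θ + 2 * Real.pi) = H (t, θ)) :
    ∃ M' : ℝ → ℝ, (∀ t, HasDerivAt (fun t => ∫ θ in (-Real.pi)..Real.pi, H (t, θ)) (M' t) t) ∧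
      ∀ t, HasDerivAt M' (∫ θ in (-Real.pi)..Real.pi, lap H (t, θ)) t := by
  have hF : ContDiff ℝ 1 (fderiv ℝ H) := hH.fderiv_right (by norm_num)
  have h1 : ContDiff ℝ 1 (fun z => fderiv ℝ H z (1, 0)) := by fun_prop
  have h2 : ContDiff ℝ 1 (fun z => fderiv ℝ H z (0, 1)) := by fun_prop
  refine ⟨fun t => ∫ θ in (-Real.pi)..Real.pi, fderiv ℝ H (t, θ) (1, 0),
    fun t => hasDerivAt_param (hH.of_le (by norm_num)) _ _ t, fun t => ?_⟩
  refine (hasDerivAt_param h1 _ _ t).congr_deriv ?_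
  have e1 : ∀ z v w, fderiv ℝ (fun z => fderiv ℝ H z v) z w = fderiv ℝ (fderiv ℝ H) z w v := by
    intro z v w
    have := ((hF.differentiable (by norm_num) z).hasFDerivAt.clm_apply (hasFDerivAt_const v z)).fderiv
    rw [this]; simp
  have hcc : ∀ v : ℝ × ℝ, Continuous fun θ : ℝ => fderiv ℝ (fderiv ℝ H) (t, θ) v v := by
    intro v
    exact (((hF.continuous_fderiv (by norm_num)).comp
      (by fun_prop : Continuous fun θ : ℝ => (t, θ))).clm_apply continuous_const).clm_apply continuous_const
  have e2 : ∫ θ in (-Real.pi)..Real.pi, fderiv ℝ (fderiv ℝ H) (t, θ) (0, 1) (0, 1) = 0 := by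
    rw [intervalIntegral.integral_eq_sub_of_hasDerivAt (f := fun θ => fderiv ℝ H (t, θ) (0, 1))]
    · rw [sub_eq_zero]
      have : ∀ θ, fderiv ℝ H (t, θ) (0, 1) = deriv (fun θ => H (t, θ)) θ := fun θ =>
        (((hH.differentiable (by norm_num) (t, θ)).hasFDerivAt.comp_hasDerivAt θ
          ((hasDerivAt_const θ t).prodMk (hasDerivAt_id θ))).deriv).symm
      rw [this, this]
      have hp : (fun θ => H (t, θ)) = fun θ => H (t, θ + 2 * Real.pi) := by
        ext θ; rw [hper]
      have h3 : deriv (fun θ => H (t, θ)) (-Real.pi) = deriv (fun θ => H (t, θ + 2 * Real.pi)) (-Real.pi) := by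
        rw [← hp]
      rw [h3, deriv_comp_add_const (fun θ => H (t, θ))]
      congr 1; ring
    · intro θ _
      have := (h2.differentiable (by norm_num) (t, θ)).hasFDerivAt.comp_hasDerivAt θ
          ((hasDerivAt_const θ t).prodMk (hasDerivAt_id θ))
      rw [e1] at this
      exact this
    · exact (hcc _).intervalIntegrable _ _
  have e3 : ∀ θ, lap H (t, θ) = fderiv ℝ (fderiv ℝ H) (t, θ) (1, 0) (1, 0) +
      fderiv ℝ (fderiv ℝ H) (t, θ) (0, 1) (0, 1) := fun θ => lap_eq hH.contDiffAt
  simp only [e1, e3]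
  rw [intervalIntegral.integral_add ((hcc _).intervalIntegrable _ _) ((hcc _).intervalIntegrable _ _),
    e2, add_zero]

theorem lap_continuous {H : ℝ × ℝ → ℝ} (hH : ContDiff ℝ 2 H) : Continuous (lap H) := by
  have hF : ContDiff ℝ 1 (fderiv ℝ H) := hH.fderiv_right (by norm_num)
  rw [show lap H = _ from funext fun z => lap_eq hH.contDiffAt]
  have := hF.continuous_fderiv (by norm_num)
  exact ((this.clm_apply continuous_const).clm_apply continuous_const).add
    ((this.clm_apply continuous_const).clm_apply continuous_const)

theorem convex_lim {N N' N'' : ℝ → ℝ} {b L : ℝ} (h1 : ∀ t, HasDerivAt N (N' t) t)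
    (h2 : ∀ t, HasDerivAt N' (N'' t) t) (h3 : ∀ t < b, 0 ≤ N'' t)
    (hL : Filter.Tendsto N Filter.atBot (nhds L)) : ∀ t < b, L ≤ N t := by
  have hmono : MonotoneOn N' (Iio b) := by
    apply monotoneOn_of_deriv_nonneg (convex_Iio b)
    · exact fun t _ => (h2 t).continuousAt.continuousWithinAt
    · exact fun t _ => (h2 t).differentiableAt.differentiableWithinAt
    · intro t ht
      rw [(h2 t).deriv]
      rw [interior_Iio] at ht
      exact h3 t ht
  have hN' : ∀ t < b, 0 ≤ N' t := by
    intro t0 ht0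
    by_contra hneg
    push Not at hneg
    have hge : ∀ t ≤ t0, N t0 + N' t0 * (t - t0) ≤ N t := by
      intro t ht
      rcases ht.eq_or_lt with rfl | ht
      · simp
      obtain ⟨ξ, hξ, he⟩ := exists_hasDerivAt_eq_slope N N' ht
        (fun x _ => (h1 x).continuousAt.continuousWithinAt) (fun x _ => h1 x)
      have : N' ξ ≤ N' t0 := hmono (lt_trans hξ.2 ht0) ht0 hξ.2.le
      rw [he, div_le_iff₀ (by linarith)] at this
      linarith
    have ht : Filter.Tendsto (fun t => N t0 + N' t0 * (t - t0)) Filter.atBot Filter.atTop := by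
      apply Filter.tendsto_atTop_add_const_left
      apply Filter.Tendsto.const_mul_atBot_of_neg hneg
      exact Filter.tendsto_atBot_add_const_right _ _ Filter.tendsto_id
    have h4 : Filter.Tendsto N Filter.atBot Filter.atTop :=
      Filter.tendsto_atTop_mono' _ (Filter.eventually_atBot.2 ⟨t0, hge⟩) ht
    exact not_tendsto_nhds_of_tendsto_atTop h4 L hL
  have hmonoN : MonotoneOn N (Iio b) := by
    apply monotoneOn_of_deriv_nonneg (convex_Iio b)
    · exact fun t _ => (h1 t).continuousAt.continuousWithinAt
    · exact fun t _ => (h1 t).differentiableAt.differentiableWithinAt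
    · intro t ht
      rw [(h1 t).deriv]
      rw [interior_Iio] at ht
      exact hN' t ht
  intro t ht
  refine le_of_tendsto hL (Filter.eventually_atBot.2 ⟨t, fun s hs => ?_⟩)
  exact hmonoN (lt_of_le_of_lt hs ht) ht hs

theorem nrm_Ph (z : ℝ × ℝ) : nrm (Ph z) = Real.exp z.1 := by
  unfold nrm Ph
  dsimp only
  rw [show (Real.exp z.1 * Real.cos z.2) ^ 2 + (Real.exp z.1 * Real.sin z.2) ^ 2 = Real.exp z.1 ^ 2 by
    have := Real.sin_sq_add_cos_sq z.2
    linear_combination (Real.exp z.1 ^ 2) * this]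
  exact Real.sqrt_sq (Real.exp_pos _).le

theorem norm_le_nrm (z : ℝ × ℝ) : ‖z‖ ≤ nrm z := by
  unfold nrm
  rw [Prod.norm_def]
  refine max_le (Real.abs_le_sqrt ?_) (Real.abs_le_sqrt ?_) <;> nlinarith [sq_nonneg z.1, sq_nonneg z.2]

theorem Ph_mem {p : ℝ × ℝ} {s t θ : ℝ} (hs : 0 < s) (ht : t < Real.log s) :
    p + Ph (t, θ) ∈ Metric.closedBall p s := by
  rw [Metric.mem_closedBall, dist_eq_norm, add_sub_cancel_left]
  refine (norm_le_nrm _).trans ?_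
  rw [nrm_Ph]
  exact ((Real.lt_log_iff_exp_lt hs).1 ht).le

theorem Ph_periodic (t θ : ℝ) : Ph (t, θ + 2 * Real.pi) = Ph (t, θ) := by
  simp [Ph]

theorem mean_ineq {G : ℝ × ℝ → ℝ} (hG : ContDiff ℝ 2 G) (p : ℝ × ℝ) {s F : ℝ} (hs : 0 < s)
    (hF : ∀ y ∈ Metric.closedBall p s, -F ≤ lap G y) {t : ℝ} (ht : t < Real.log s) :
    2 * Real.pi * G p ≤ (∫ θ in (-Real.pi)..Real.pi, G (p + Ph (t, θ)))
      + Real.pi * F / 2 * Real.exp (2 * t) := by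
  have hpi := Real.pi_pos
  have hc := contDiff_Ph
  have hH : ContDiff ℝ 2 (fun z => G (p + Ph z)) := by fun_prop
  obtain ⟨M', hM1, hM2⟩ := mean_deriv hH (fun t θ => by rw [Ph_periodic])
  have hexp : ∀ t : ℝ, HasDerivAt (fun s => Real.exp (2 * s)) (2 * Real.exp (2 * t)) t := by
    intro t
    have := ((hasDerivAt_id t).const_mul 2).exp
    simpa [mul_comm] using this
  refine convex_lim (b := Real.log s)
    (N := fun t => (∫ θ in (-Real.pi)..Real.pi, G (p + Ph (t, θ))) + Real.pi * F / 2 * Real.exp (2 * t))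
    (fun t => (hM1 t).add ((hexp t).const_mul _))
    (fun t => (hM2 t).add (((hexp t).const_mul 2).const_mul _)) ?_ ?_ t ht
  · intro t ht
    have : ∫ θ in (-Real.pi)..Real.pi, (-(F * Real.exp (2 * t))) ≤
        ∫ θ in (-Real.pi)..Real.pi, lap (fun z => G (p + Ph z)) (t, θ) := by
      apply intervalIntegral.integral_mono_on (by linarith)
      · simp
      · exact ((lap_continuous hH).comp (by fun_prop : Continuous fun θ : ℝ => (t, θ))).intervalIntegrable _ _
      · intro θ _
        rw [lap_Ph p (t, θ) hG.contDiffAt]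
        have := hF _ (Ph_mem (θ := θ) hs ht)
        nlinarith [Real.exp_pos (2 * t)]
    rw [intervalIntegral.integral_const, smul_eq_mul] at this
    linarith
  · have hcont : Continuous fun r : ℝ => (∫ θ in (-Real.pi)..Real.pi,
        G (p + (r * Real.cos θ, r * Real.sin θ))) + Real.pi * F / 2 * r ^ 2 := by
      refine Continuous.add ?_ (by fun_prop)
      refine intervalIntegral.continuous_parametric_intervalIntegral_of_continuous' ?_ _ _
      have := hG.continuous
      fun_prop
    have := (hcont.tendsto 0).comp Real.tendsto_exp_atBot
    refine (this.congr fun t => ?_).trans (le_of_eq ?_)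
    · simp only [Function.comp, Ph_mk]
      rw [← Real.exp_nat_mul]; simp
    · have : ((0 : ℝ), (0 : ℝ)) = 0 := rfl
      simp [this]
      left; ring

theorem jensen_exp {g : ℝ → ℝ} (hg : Continuous g) {b : ℝ}
    (h : 2 * Real.pi * b ≤ ∫ θ in (-Real.pi)..Real.pi, g θ) :
    2 * Real.pi * Real.exp b ≤ ∫ θ in (-Real.pi)..Real.pi, Real.exp (g θ) := by
  have hpi := Real.pi_pos
  have h1 : ∫ θ in (-Real.pi)..Real.pi, (Real.exp b * (1 - b) + Real.exp b * g θ) ≤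
      ∫ θ in (-Real.pi)..Real.pi, Real.exp (g θ) := by
    apply intervalIntegral.integral_mono_on (by linarith)
    · exact (by fun_prop : Continuous _).intervalIntegrable _ _
    · exact (by fun_prop : Continuous _).intervalIntegrable _ _
    · intro θ _
      have := Real.add_one_le_exp (g θ - b)
      have e : Real.exp (g θ) = Real.exp b * Real.exp (g θ - b) := by
        rw [← Real.exp_add]; ring_nf
      rw [e]
      nlinarith [Real.exp_pos b]
  rw [intervalIntegral.integral_add (by simp) ((by fun_prop : Continuous fun θ => Real.exp b * g θ).intervalIntegrable _ _),
    intervalIntegral.integral_const, intervalIntegral.integral_const_mul, smul_eq_mul] at h1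
  nlinarith [mul_le_mul_of_nonneg_left h (Real.exp_pos b).le]

/-- derivative of the log-polar map -/
noncomputable def fdPh (p : ℝ × ℝ) : ℝ × ℝ →L[ℝ] ℝ × ℝ :=
  (Matrix.toLin (.finTwoProd ℝ) (.finTwoProd ℝ)
    !![Real.exp p.1 * Real.cos p.2, Real.exp p.1 * -Real.sin p.2;
      Real.exp p.1 * Real.sin p.2, Real.exp p.1 * Real.cos p.2]).toContinuousLinearMap

theorem hasFDerivAt_Ph (p : ℝ × ℝ) : HasFDerivAt Ph (fdPh p) p := by
  unfold fdPh
  rw [Matrix.toLin_finTwoProd_toContinuousLinearMap]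
  have h := HasFDerivAt.prodMk (𝕜 := ℝ)
      (((Real.hasDerivAt_exp p.1).comp_hasFDerivAt p hasFDerivAt_fst).mul
        ((Real.hasDerivAt_cos p.2).comp_hasFDerivAt p hasFDerivAt_snd))
      (((Real.hasDerivAt_exp p.1).comp_hasFDerivAt p hasFDerivAt_fst).mul
        ((Real.hasDerivAt_sin p.2).comp_hasFDerivAt p hasFDerivAt_snd))
  refine HasFDerivAt.congr_fderiv h ?_
  ext <;> simp <;> ring

theorem det_fdPh (p : ℝ × ℝ) : (fdPh p).det = Real.exp (2 * p.1) := by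
  have := Real.sin_sq_add_cos_sq p.2
  rw [show 2 * p.1 = p.1 + p.1 by ring, Real.exp_add]
  unfold fdPh
  simp only [LinearMap.det_toContinuousLinearMap, LinearMap.det_toLin, Matrix.det_fin_two_of]
  linear_combination (Real.exp p.1 ^ 2) * this

theorem Ph_eq_polar (z : ℝ × ℝ) : Ph z = polarCoord.symm (Real.exp z.1, z.2) := by
  simp [Ph, polarCoord_symm_apply]

theorem Ph_injOn : InjOn Ph (univ ×ˢ Ioo (-Real.pi) Real.pi) := by
  rintro ⟨a, b⟩ ⟨-, hb⟩ ⟨c, d⟩ ⟨-, hd⟩ h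
  rw [Ph_eq_polar, Ph_eq_polar] at h
  have := polarCoord.symm.injOn (x₁ := (Real.exp a, b)) (x₂ := (Real.exp c, d))
    (by simpa using ⟨Real.exp_pos a, hb⟩) (by simpa using ⟨Real.exp_pos c, hd⟩) h
  simpa using this

theorem Ph_image : Ph '' (univ ×ˢ Ioo (-Real.pi) Real.pi) = polarCoord.source := by
  rw [← polarCoord.symm_image_target_eq_source]
  ext x
  constructor
  · rintro ⟨⟨a, b⟩, ⟨-, hb⟩, rfl⟩
    exact ⟨(Real.exp a, b), by simpa using ⟨Real.exp_pos a, hb⟩, (Ph_eq_polar (a, b)).symm⟩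
  · rintro ⟨⟨r, b⟩, hr, rfl⟩
    simp only [polarCoord_target] at hr
    refine ⟨(Real.log r, b), ⟨mem_univ _, hr.2⟩, ?_⟩
    rw [Ph_eq_polar]
    simp only
    rw [Real.exp_log hr.1]

theorem cov {f : ℝ × ℝ → ℝ} (hf : Integrable f) :
    Integrable (fun t : ℝ => ∫ θ in (-Real.pi)..Real.pi, Real.exp (2 * t) * f (Ph (t, θ))) ∧
    ∫ t : ℝ, ∫ θ in (-Real.pi)..Real.pi, Real.exp (2 * t) * f (Ph (t, θ)) = ∫ x, f x := by
  have hs : MeasurableSet (univ ×ˢ Ioo (-Real.pi) Real.pi : Set (ℝ × ℝ)) :=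
    MeasurableSet.univ.prod measurableSet_Ioo
  have hd : ∀ x ∈ (univ ×ˢ Ioo (-Real.pi) Real.pi : Set (ℝ × ℝ)),
      HasFDerivWithinAt Ph (fdPh x) (univ ×ˢ Ioo (-Real.pi) Real.pi) x :=
    fun x _ => (hasFDerivAt_Ph x).hasFDerivWithinAt
  have h1 := (integrableOn_image_iff_integrableOn_abs_det_fderiv_smul volume hs hd Ph_injOn f).1
    hf.integrableOn
  have h2 := integral_image_eq_integral_abs_det_fderiv_smul volume hs hd Ph_injOn f
  rw [Ph_image, setIntegral_congr_set polarCoord_source_ae_eq_univ, setIntegral_univ] at h2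
  simp only [det_fdPh, abs_of_pos (Real.exp_pos _), smul_eq_mul] at h1 h2
  have hI : ∀ g : ℝ → ℝ, ∫ θ in (-Real.pi)..Real.pi, g θ = ∫ θ in Ioo (-Real.pi) Real.pi, g θ := by
    intro g
    rw [intervalIntegral.integral_of_le (by linarith [Real.pi_pos]), integral_Ioc_eq_integral_Ioo]
  simp only [hI]
  constructor
  · have h3 : Integrable (fun x : ℝ × ℝ => Real.exp (2 * x.1) * f (Ph x))
        ((volume.restrict univ).prod (volume.restrict (Ioo (-Real.pi) Real.pi))) := by
      rw [Measure.prod_restrict]; exact h1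
    simpa using h3.integral_prod_left
  · rw [h2, Measure.volume_eq_prod, setIntegral_prod _ h1]
    simp

theorem ball_int {h : ℝ × ℝ → ℝ} (hc : Continuous h) (p : ℝ × ℝ) {s c : ℝ} (hs : 0 < s)
    (hpos : ∀ y ∈ Metric.closedBall p s, 0 ≤ h y)
    (hm : ∀ t < Real.log s, c ≤ ∫ θ in (-Real.pi)..Real.pi, h (p + Ph (t, θ))) :
    c * s ^ 2 / 2 ≤ ∫ y in Metric.closedBall p s, h y := by
  set B : Set (ℝ × ℝ) := {y | nrm y < s} with hB
  have hnc : Continuous nrm := by unfold nrm; fun_prop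
  have hBm : MeasurableSet B := (isOpen_lt hnc continuous_const).measurableSet
  have hBsub : B ⊆ Metric.closedBall 0 s := by
    intro y hy
    rw [mem_closedBall_zero_iff]
    exact (norm_le_nrm y).trans (le_of_lt hy)
  have hIg0 : IntegrableOn (fun y => h (p + y)) (Metric.closedBall 0 s) :=
    (by fun_prop : Continuous fun y => h (p + y)).continuousOn.integrableOn_compact
      (isCompact_closedBall _ _)
  have hIg : Integrable (B.indicator fun y => h (p + y)) :=
    (hIg0.mono_set hBsub).integrable_indicator hBm
  obtain ⟨c1, c2⟩ := cov hIg
  have e1 : ∫ y in Metric.closedBall p s, h y = ∫ y in Metric.closedBall 0 s, h (p + y) := by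
    have hmp := measurePreserving_add_left (volume : Measure (ℝ × ℝ)) p
    have he : MeasurableEmbedding (fun y : ℝ × ℝ => p + y) := (Homeomorph.addLeft p).measurableEmbedding
    rw [← hmp.setIntegral_preimage_emb he]
    congr 2
    simp
  rw [e1]
  have e2 : ∫ y in B, h (p + y) ≤ ∫ y in Metric.closedBall 0 s, h (p + y) := by
    refine setIntegral_mono_set hIg0 ?_ hBsub.eventuallyLE
    refine (ae_restrict_iff' measurableSet_closedBall).2 (Filter.Eventually.of_forall fun y hy => ?_)
    refine hpos _ ?_
    rw [Metric.mem_closedBall, dist_eq_norm, add_sub_cancel_left]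
    exact mem_closedBall_zero_iff.1 hy
  refine le_trans ?_ e2
  rw [← integral_indicator hBm, ← c2]
  have e3 : ∫ t in Iio (Real.log s), c * Real.exp (2 * t) = c * s ^ 2 / 2 := by
    rw [integral_const_mul, ← integral_Iic_eq_integral_Iio, integral_exp_mul_Iic (by norm_num)]
    rw [show 2 * Real.log s = ((2 : ℕ) : ℝ) * Real.log s by simp, Real.exp_nat_mul, Real.exp_log hs]
    ring
  have hi : IntegrableOn (fun t => c * Real.exp (2 * t)) (Iio (Real.log s)) := by
    refine Integrable.const_mul ?_ c
    exact ((integrableOn_exp_mul_Iic (by norm_num : (0:ℝ) < 2) (Real.log s))).mono_set Iio_subset_Iic_self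
  rw [← e3, ← integral_indicator measurableSet_Iio]
  refine integral_mono (hi.integrable_indicator measurableSet_Iio) c1 ?_
  intro t
  dsimp only
  have hmem : ∀ θ, Ph (t, θ) ∈ B ↔ t < Real.log s := by
    intro θ
    simp only [hB, mem_ofPred_eq, nrm_Ph]
    exact (Real.lt_log_iff_exp_lt hs).symm
  by_cases ht : t < Real.log s
  · rw [indicator_of_mem (show t ∈ Iio (Real.log s) from ht)]
    have : ∀ θ, B.indicator (fun y => h (p + y)) (Ph (t, θ)) = h (p + Ph (t, θ)) := fun θ =>
      indicator_of_mem ((hmem θ).2 ht) _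
    simp only [this]
    rw [intervalIntegral.integral_const_mul, mul_comm]
    exact mul_le_mul_of_nonneg_left (hm t ht) (Real.exp_pos _).le
  · rw [indicator_of_notMem (show t ∉ Iio (Real.log s) from ht)]
    have : ∀ θ, B.indicator (fun y => h (p + y)) (Ph (t, θ)) = 0 := fun θ =>
      indicator_of_notMem (fun h' => ht ((hmem θ).1 h')) _
    simp [this]

section

theorem slope_lim {N N' : ℝ → ℝ} {L C : ℝ} (h1 : ∀ t, HasDerivAt N (N' t) t)
    (hL : Filter.Tendsto N' Filter.atBot (nhds L)) (hC : ∀ t ≤ 0, |N t| ≤ C) : L = 0 := by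
  by_contra hne
  have hpos : 0 < |L| := abs_pos.2 hne
  have hev : ∀ᶠ t in Filter.atBot, |L| / 2 < |N' t| :=
    (hL.abs).eventually_const_lt (by linarith)
  obtain ⟨T, hT⟩ := Filter.eventually_atBot.1 hev
  set T1 := min T 0
  have hC0 : 0 ≤ C := (abs_nonneg _).trans (hC 0 le_rfl)
  set R := 4 * C / |L| + 1 with hR
  have hR0 : 0 < R := by positivity
  obtain ⟨ξ, hξ, he⟩ := exists_hasDerivAt_eq_slope N N' (show T1 - R < T1 by linarith)
    (fun t _ => (h1 t).continuousAt.continuousWithinAt) (fun t _ => h1 t)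
  have h2 := hT ξ (hξ.2.le.trans (min_le_left _ _))
  have h3 := hC T1 (min_le_right _ _)
  have h4 := hC (T1 - R) (by have := min_le_right T 0; linarith)
  rw [he, abs_div, lt_div_iff₀ (by rw [abs_pos]; linarith), abs_of_pos (show 0 < T1 - (T1 - R) by linarith)] at h2
  have h5 := abs_sub (N T1) (N (T1 - R))
  have h6 : |L| * R = 4 * C + |L| := by rw [hR]; field_simp
  nlinarith

structure Cyl {n : ℕ} (A : Matrix (Fin n) (Fin n) ℝ) (b : Fin n → ℝ)
    (W : Fin n → ℝ × ℝ → ℝ) : Prop where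
  smooth : ∀ j, ContDiff ℝ 2 (W j)
  per : ∀ j t θ, W j (t, θ + 2 * Real.pi) = W j (t, θ)
  pos : ∀ i j, 0 ≤ A i j
  pde : ∀ j z, lap (W j) z = -∑ k, A j k * Real.exp (W k z)
  int : ∀ k, Integrable (fun t => ∫ θ in (-Real.pi)..Real.pi, Real.exp (W k (t, θ)))
  bdd : ∀ j, ∃ C, ∀ t ≤ 0, ∀ θ, |W j (t, θ) - b j * t| ≤ C

/-- circle integral of `exp W`. -/
noncomputable def Sf (w : ℝ × ℝ → ℝ) (t : ℝ) : ℝ :=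
  ∫ θ in (-Real.pi)..Real.pi, Real.exp (w (t, θ))

/-- circle integral. -/
noncomputable def Mf (w : ℝ × ℝ → ℝ) (t : ℝ) : ℝ :=
  ∫ θ in (-Real.pi)..Real.pi, w (t, θ)

theorem Sf_nonneg (w : ℝ × ℝ → ℝ) (t : ℝ) : 0 ≤ Sf w t :=
  intervalIntegral.integral_nonneg (by linarith [Real.pi_pos]) fun _ _ => (Real.exp_pos _).le

theorem Sf_cont {w : ℝ × ℝ → ℝ} (hw : Continuous w) : Continuous (Sf w) := by
  unfold Sf
  exact intervalIntegral.continuous_parametric_intervalIntegral_of_continuous' (by fun_prop) _ _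

variable {n : ℕ} {A : Matrix (Fin n) (Fin n) ℝ} {b : Fin n → ℝ} {W : Fin n → ℝ × ℝ → ℝ}

theorem Cyl.intS (h : Cyl A b W) (k : Fin n) : Integrable (Sf (W k)) := h.int k

theorem Cyl.cont (h : Cyl A b W) (k : Fin n) : Continuous (W k) := (h.smooth k).continuous

theorem Cyl.mean (h : Cyl A b W) (j : Fin n) :
    ∃ M' : ℝ → ℝ, (∀ t, HasDerivAt (Mf (W j)) (M' t) t) ∧
      ∀ t, M' t = 2 * Real.pi * b j - (∑ k, A j k * ∫ t, Sf (W k) t)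
        + ∑ k, A j k * ∫ s in Ioi t, Sf (W k) s := by
  have hpi := Real.pi_pos
  obtain ⟨M', hM1, hM2⟩ := mean_deriv (h.smooth j) (h.per j)
  refine ⟨M', hM1, ?_⟩
  set g : ℝ → ℝ := fun t => ∑ k, A j k * Sf (W k) t with hg
  have hgc : Continuous g := by
    have := fun k => Sf_cont (h.cont k)
    fun_prop
  have hgi : Integrable g := integrable_finsetSum _ fun k _ => (h.intS k).const_mul _
  have hlap : ∀ t, ∫ θ in (-Real.pi)..Real.pi, lap (W j) (t, θ) = - g t := by
    intro t
    simp only [h.pde]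
    rw [intervalIntegral.integral_neg, intervalIntegral.integral_finsetSum]
    · simp only [hg, Sf, intervalIntegral.integral_const_mul]
    · intro k _
      have := h.cont k
      exact (by fun_prop : Continuous _).intervalIntegrable _ _
  simp only [hlap] at hM2
  have hconst : ∀ t s, M' t - M' s = (∫ x in Iic s, g x) - ∫ x in Iic t, g x := by
    intro t s
    have := intervalIntegral.integral_eq_sub_of_hasDerivAt (a := s) (b := t) (fun x _ => hM2 x)
      (hgc.neg.intervalIntegrable _ _)
    rw [← this, intervalIntegral.integral_neg,
      ← intervalIntegral.integral_Iic_sub_Iic hgi.integrableOn hgi.integrableOn]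
    ring
  have htend : Filter.Tendsto M' Filter.atBot (nhds (M' 0 + ∫ x in Iic (0:ℝ), g x)) := by
    have h1 := intervalIntegral_tendsto_integral_Iic (l := Filter.atBot) (a := fun t : ℝ => t) 0 hgi.integrableOn Filter.tendsto_id
    refine (h1.const_add (M' 0)).congr fun t => ?_
    rw [← intervalIntegral.integral_Iic_sub_Iic hgi.integrableOn hgi.integrableOn, ← hconst t 0]
    ring
  obtain ⟨C, hC⟩ := h.bdd j
  have hz : M' 0 + (∫ x in Iic (0:ℝ), g x) - 2 * Real.pi * b j = 0 := by
    refine slope_lim (N := fun t => Mf (W j) t - 2 * Real.pi * b j * t) (C := C * |Real.pi - -Real.pi|)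
      (fun t => (hM1 t).sub (((hasDerivAt_id t).const_mul _).congr_deriv (mul_one _)))
      (htend.sub_const _) ?_
    intro t ht
    have : Mf (W j) t - 2 * Real.pi * b j * t =
        ∫ θ in (-Real.pi)..Real.pi, (W j (t, θ) - b j * t) := by
      rw [intervalIntegral.integral_sub]
      · simp [Mf]; ring
      · have := h.cont j
        exact (by fun_prop : Continuous _).intervalIntegrable _ _
      · simp
    rw [this, ← Real.norm_eq_abs]
    exact intervalIntegral.norm_integral_le_of_norm_le_const fun θ _ => hC t ht θ
  intro t
  have e1 : ∀ s : Set ℝ, ∑ k, A j k * ∫ x in s, Sf (W k) x = ∫ x in s, g x := by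
    intro s
    rw [integral_finsetSum _ fun k _ => ((h.intS k).const_mul _).integrableOn]
    simp only [integral_const_mul]
  have e2 := e1 univ
  simp only [Measure.restrict_univ] at e2
  rw [e1, e2]
  have := intervalIntegral.integral_Iic_add_Ioi (b := t) hgi.integrableOn hgi.integrableOn
  have := hconst t 0
  linarith

theorem Cyl.gt (h : Cyl A b W) (j : Fin n) :
    2 * Real.pi * b j < ∑ k, A j k * ∫ t, Sf (W k) t := by
  have hpi := Real.pi_pos
  by_contra hcon
  push Not at hcon
  obtain ⟨M', hM1, hM2⟩ := h.mean j
  have hmono : Monotone (Mf (W j)) := by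
    apply monotone_of_deriv_nonneg (fun t => (hM1 t).differentiableAt)
    intro t
    rw [(hM1 t).deriv, hM2]
    have : 0 ≤ ∑ k, A j k * ∫ s in Ioi t, Sf (W k) s :=
      Finset.sum_nonneg fun k _ => mul_nonneg (h.pos j k)
        (setIntegral_nonneg measurableSet_Ioi fun s _ => Sf_nonneg _ _)
    linarith
  set c := 2 * Real.pi * Real.exp (Mf (W j) 0 / (2 * Real.pi)) with hc
  have hc0 : 0 < c := by positivity
  have hlow : ∀ t ∈ Ioi (0:ℝ), c ≤ Sf (W j) t := by
    intro t ht
    have := h.cont j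
    refine jensen_exp (by fun_prop) ?_
    have h1 := hmono (le_of_lt ht)
    rw [show 2 * Real.pi * (Mf (W j) 0 / (2 * Real.pi)) = Mf (W j) 0 by field_simp]
    exact h1
  have hi : IntegrableOn (fun _ : ℝ => c) (Ioi (0:ℝ)) := by
    refine Integrable.mono' (h.intS j).integrableOn aestronglyMeasurable_const ?_
    refine (ae_restrict_iff' measurableSet_Ioi).2 (Filter.Eventually.of_forall fun t ht => ?_)
    rw [Real.norm_eq_abs, abs_of_pos hc0]
    exact hlow t ht
  rw [integrableOn_const_iff] at hi
  simp [hc0.ne'] at hi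

theorem strip_le {h : ℝ × ℝ → ℝ} (hc : Continuous h)
    (hper : ∀ t θ, h (t, θ + 2 * Real.pi) = h (t, θ)) {t θ : ℝ}
    (hpos : ∀ s φ, t - 1 ≤ s → 0 ≤ h (s, φ)) :
    ∫ y in Metric.closedBall (t, θ) 1, h y ≤
      ∫ s in (t - 1)..(t + 1), ∫ φ in (-Real.pi)..Real.pi, h (s, φ) := by
  have hpi := Real.pi_gt_three
  have hI : IntegrableOn h (Icc (t - 1) (t + 1) ×ˢ Icc (θ - 1) (θ + 1)) :=
    hc.continuousOn.integrableOn_compact (isCompact_Icc.prod isCompact_Icc)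
  rw [← closedBall_prod_same, Real.closedBall_eq_Icc, Real.closedBall_eq_Icc,
    Measure.volume_eq_prod, setIntegral_prod _ hI, intervalIntegral.integral_of_le (by linarith),
    integral_Icc_eq_integral_Ioc]
  have hc1 : ∀ a b : ℝ, Continuous fun s => ∫ φ in a..b, h (s, φ) := fun a b =>
    intervalIntegral.continuous_parametric_intervalIntegral_of_continuous' (by fun_prop) _ _
  have e1 : ∀ s, ∫ y in Icc (θ - 1) (θ + 1), h (s, y) = ∫ y in (θ-1)..(θ+1), h (s, y) := by
    intro s
    rw [intervalIntegral.integral_of_le (by linarith), integral_Icc_eq_integral_Ioc]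
  simp only [e1]
  refine setIntegral_mono_on ((hc1 _ _).integrableOn_Ioc) ((hc1 _ _).integrableOn_Ioc)
    measurableSet_Ioc ?_
  intro s hs
  have hp : Function.Periodic (fun φ => h (s, φ)) (2 * Real.pi) := fun φ => hper s φ
  have e2 := hp.intervalIntegral_add_eq (-Real.pi) (θ - 1)
  rw [show -Real.pi + 2 * Real.pi = Real.pi by ring] at e2
  rw [e2]
  have hcs : Continuous fun φ => h (s, φ) := by fun_prop
  refine intervalIntegral.integral_mono_interval le_rfl (by linarith) (by linarith) ?_
    (hcs.intervalIntegrable _ _)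
  exact Filter.Eventually.of_forall fun φ => hpos s φ hs.1.le

end

section

variable {n : ℕ} {A : Matrix (Fin n) (Fin n) ℝ} {b : Fin n → ℝ} {W : Fin n → ℝ × ℝ → ℝ}

theorem Cyl.eps_reg (h : Cyl A b W) {a : ℝ} (ha : 1 ≤ a) (hA : ∀ j, ∑ k, A j k ≤ a) (p : ℝ × ℝ)
    (hsmall : ∀ k, ∫ y in Metric.closedBall p 1, Real.exp (W k y) < Real.pi / (Real.exp 1 * a))
    (k1 : Fin n) : Real.exp (W k1 p) ≤ 4 / a := by
  by_contra hcon
  push Not at hcon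
  have hpi := Real.pi_pos
  have ha0 : 0 < a := by linarith
  have hmax : ∀ k, ∃ y ∈ Metric.closedBall p 1, ∀ z ∈ Metric.closedBall p 1,
      (1 - dist z p) ^ 2 * Real.exp (W k z) ≤ (1 - dist y p) ^ 2 * Real.exp (W k y) := by
    intro k
    have := h.cont k
    exact (isCompact_closedBall p 1).exists_isMaxOn ⟨p, by simp⟩
      (f := fun z => (1 - dist z p) ^ 2 * Real.exp (W k z)) (by fun_prop)
  choose Y hY1 hY2 using hmax
  have : Nonempty (Fin n) := ⟨k1⟩
  obtain ⟨k0, hk0⟩ := Finite.exists_max fun k => (1 - dist (Y k) p) ^ 2 * Real.exp (W k (Y k))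
  set y0 := Y k0 with hy0
  set Λ := Real.exp (W k0 y0) with hΛ
  have hΛ0 : 0 < Λ := Real.exp_pos _
  set d := 1 - dist y0 p with hd
  have hall : ∀ k, ∀ z ∈ Metric.closedBall p 1,
      (1 - dist z p) ^ 2 * Real.exp (W k z) ≤ d ^ 2 * Λ := fun k z hz =>
    (hY2 k z hz).trans (hk0 k)
  have hbig : 4 / a < d ^ 2 * Λ := by
    have := hall k1 p (by simp)
    simp only [dist_self, sub_zero, one_pow, one_mul] at this
    linarith
  have hdn : 0 ≤ d := by
    have := Metric.mem_closedBall.1 (hY1 k0)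
    rw [hd]; linarith
  have hd0 : 0 < d := by
    rcases hdn.eq_or_lt with h0 | h0
    · exfalso
      rw [← h0] at hbig
      have : 0 < 4 / a := by positivity
      norm_num at hbig
      linarith
    · exact h0
  set s := Real.sqrt (1 / (a * Λ)) with hs
  have hs0 : 0 < s := Real.sqrt_pos.2 (by positivity)
  have hs2 : s ^ 2 = 1 / (a * Λ) := Real.sq_sqrt (by positivity)
  have hsd : s ≤ d / 2 := by
    refine le_of_sq_le_sq ?_ (by linarith)
    rw [hs2, div_le_iff₀ (by positivity)]
    rw [div_lt_iff₀ ha0] at hbig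
    nlinarith
  have hsub : ∀ y ∈ Metric.closedBall y0 s, dist y p ≤ 1 - d / 2 := by
    intro y hy
    have h1 := dist_triangle y y0 p
    have h2 := Metric.mem_closedBall.1 hy
    have h3 : dist y0 p = 1 - d := by rw [hd]; ring
    linarith
  have h4 : ∀ k, ∀ y ∈ Metric.closedBall y0 s, Real.exp (W k y) ≤ 4 * Λ := by
    intro k y hy
    have h1 := hsub y hy
    have h2 := hall k y (Metric.mem_closedBall.2 (by linarith))
    have h3 : (d / 2) ^ 2 ≤ (1 - dist y p) ^ 2 := by
      apply pow_le_pow_left₀ (by linarith); linarith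
    have h5 := Real.exp_pos (W k y)
    have h6 : d ^ 2 * Real.exp (W k y) ≤ d ^ 2 * (4 * Λ) := by nlinarith
    exact le_of_mul_le_mul_left h6 (by positivity)
  have hlap : ∀ y ∈ Metric.closedBall y0 s, -(4 * a * Λ) ≤ lap (W k0) y := by
    intro y hy
    rw [h.pde, neg_le_neg_iff]
    calc ∑ k, A k0 k * Real.exp (W k y) ≤ ∑ k, A k0 k * (4 * Λ) :=
          Finset.sum_le_sum fun k _ => mul_le_mul_of_nonneg_left (h4 k y hy) (h.pos _ _)
      _ = (∑ k, A k0 k) * (4 * Λ) := by rw [Finset.sum_mul]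
      _ ≤ a * (4 * Λ) := mul_le_mul_of_nonneg_right (hA k0) (by positivity)
      _ = 4 * a * Λ := by ring
  have hc := h.cont k0
  have hPc := contDiff_Ph.continuous
  have hm : ∀ t < Real.log s, 2 * Real.pi * Real.exp (W k0 y0 - 1) ≤
      ∫ θ in (-Real.pi)..Real.pi, Real.exp (W k0 (y0 + Ph (t, θ))) := by
    intro t ht
    refine jensen_exp (g := fun θ => W k0 (y0 + Ph (t, θ))) (by fun_prop) ?_
    have h1 := mean_ineq (h.smooth k0) y0 hs0 hlap ht
    have h2 : Real.exp (2 * t) ≤ 1 / (a * Λ) := by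
      have := ((Real.lt_log_iff_exp_lt hs0).1 ht).le
      rw [← hs2, show 2 * t = ((2:ℕ):ℝ) * t by simp, Real.exp_nat_mul]
      exact pow_le_pow_left₀ (Real.exp_pos _).le this 2
    have h3 : Real.pi * (4 * a * Λ) / 2 * Real.exp (2 * t) ≤
        Real.pi * (4 * a * Λ) / 2 * (1 / (a * Λ)) := mul_le_mul_of_nonneg_left h2 (by positivity)
    have h5 : Real.pi * (4 * a * Λ) / 2 * (1 / (a * Λ)) = 2 * Real.pi := by field_simp; ring
    linarith
  have hb := ball_int (h := fun y => Real.exp (W k0 y)) (by fun_prop) y0 hs0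
    (fun _ _ => (Real.exp_pos _).le) hm
  have hle : ∫ y in Metric.closedBall y0 s, Real.exp (W k0 y) ≤
      ∫ y in Metric.closedBall p 1, Real.exp (W k0 y) := by
    refine setIntegral_mono_set ((by fun_prop : Continuous fun y => Real.exp (W k0 y)).continuousOn.integrableOn_compact
      (isCompact_closedBall _ _)) (Filter.Eventually.of_forall fun y => (Real.exp_pos _).le) ?_
    refine LE.le.eventuallyLE fun y hy => Metric.mem_closedBall.2 ?_
    have := hsub y hy
    linarith
  have he : 2 * Real.pi * Real.exp (W k0 y0 - 1) * s ^ 2 / 2 = Real.pi / (Real.exp 1 * a) := by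
    rw [hs2, Real.exp_sub, ← hΛ]
    field_simp
  have := hsmall k0
  linarith

theorem Ioi_small {g : ℝ → ℝ} (hg : Integrable g) {ε : ℝ} (hε : 0 < ε) :
    ∀ᶠ T in Filter.atTop, ∫ t in Ioi T, g t < ε := by
  have h1 := intervalIntegral_tendsto_integral_Ioi (l := Filter.atTop) (b := fun t : ℝ => t) 0
    hg.integrableOn Filter.tendsto_id
  have h2 := h1.eventually_const_lt (show (∫ t in Ioi (0:ℝ), g t) - ε < _ by linarith)
  filter_upwards [h2] with T hT
  have := intervalIntegral.integral_Ioi_sub_Ioi' (a := 0) (b := T) hg.integrableOn hg.integrableOn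
  linarith

theorem Cyl.upper (h : Cyl A b W) : ∃ T C : ℝ, 0 ≤ T ∧ 0 ≤ C ∧
    ∀ k t θ, T ≤ t → Real.exp (W k (t, θ)) ≤ C := by
  have hpi := Real.pi_pos
  set a := 1 + ∑ j, ∑ k, A j k with ha
  have hs : ∀ j, 0 ≤ ∑ k, A j k := fun j => Finset.sum_nonneg fun k _ => h.pos j k
  have ha1 : 1 ≤ a := by
    have : 0 ≤ ∑ j, ∑ k, A j k := Finset.sum_nonneg fun j _ => hs j
    linarith
  have hA : ∀ j, ∑ k, A j k ≤ a := by
    intro j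
    have := Finset.single_le_sum (f := fun j => ∑ k, A j k) (fun j _ => hs j) (Finset.mem_univ j)
    linarith
  have hε : 0 < Real.pi / (Real.exp 1 * a) := by positivity
  have hev := Filter.eventually_all.2 fun k => Ioi_small (h.intS k) hε
  obtain ⟨T, hT⟩ := Filter.eventually_atTop.1 hev
  refine ⟨max T 0 + 1, 4 / a, by positivity, by positivity, ?_⟩
  intro k t θ ht
  refine h.eps_reg ha1 hA (t, θ) (fun k => ?_) k
  have hc := h.cont k
  have h1 := strip_le (h := fun y => Real.exp (W k y)) (t := t) (θ := θ) (by fun_prop)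
    (fun t θ => by rw [h.per]) (fun _ _ _ => (Real.exp_pos _).le)
  refine h1.trans_lt (lt_of_le_of_lt ?_ (hT (t - 1) ?_ k))
  · rw [intervalIntegral.integral_of_le (by linarith)]
    refine setIntegral_mono_set (h.intS k).integrableOn
      (Filter.Eventually.of_forall fun y => Sf_nonneg _ _) ?_
    exact LE.le.eventuallyLE Ioc_subset_Ioi_self
  · have := le_max_left T 0
    linarith

end

section

variable {n : ℕ} {A : Matrix (Fin n) (Fin n) ℝ} {b : Fin n → ℝ} {W : Fin n → ℝ × ℝ → ℝ}

theorem Cyl.lap_bound (h : Cyl A b W) (j : Fin n) {E : ℝ} {z : ℝ × ℝ}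
    (hE : ∀ k, Real.exp (W k z) ≤ E) : |lap (W j) z| ≤ (∑ k, A j k) * E := by
  rw [h.pde, abs_neg, abs_of_nonneg (Finset.sum_nonneg fun k _ => mul_nonneg (h.pos j k) (Real.exp_pos _).le),
    Finset.sum_mul]
  exact Finset.sum_le_sum fun k _ => mul_le_mul_of_nonneg_left (hE k) (h.pos _ _)

theorem Mf_lower (h : Cyl A b W) (j : Fin n) {s : ℝ} (hs : 0 ≤ s) :
    Mf (W j) 0 - ((∑ k, A j k * ∫ t, Sf (W k) t) - 2 * Real.pi * b j) * s ≤ Mf (W j) s := by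
  obtain ⟨M', hM1, hM2⟩ := h.mean j
  set D := (∑ k, A j k * ∫ t, Sf (W k) t) - 2 * Real.pi * b j
  have hd : ∀ t, HasDerivAt (fun t => Mf (W j) t + D * t) (M' t + D) t := fun t =>
    (hM1 t).add (((hasDerivAt_id t).const_mul D).congr_deriv (mul_one _))
  have hmono : Monotone (fun t => Mf (W j) t + D * t) := by
    apply monotone_of_deriv_nonneg (fun t => (hd t).differentiableAt)
    intro t
    rw [(hd t).deriv, hM2]
    have : 0 ≤ ∑ k, A j k * ∫ s in Ioi t, Sf (W k) s :=
      Finset.sum_nonneg fun k _ => mul_nonneg (h.pos j k)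
        (setIntegral_nonneg measurableSet_Ioi fun s _ => Sf_nonneg _ _)
    simp only [D]
    linarith
  have := hmono hs
  simp only [mul_zero, add_zero] at this
  linarith

theorem Cyl.growth (h : Cyl A b W) {T C : ℝ} (hT : 0 ≤ T) (hC : 0 ≤ C)
    (hup : ∀ k t θ, T ≤ t → Real.exp (W k (t, θ)) ≤ C) (j : Fin n) :
    ∃ C', ∀ t θ, T + 1 ≤ t → |W j (t, θ)| ≤ C' * (1 + |t|) := by
  have hpi := Real.pi_pos
  set K := Real.log (C + 1) with hK
  have hK0 : 0 ≤ K := Real.log_nonneg (by linarith)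
  have hWK : ∀ t θ, T ≤ t → W j (t, θ) ≤ K := by
    intro t θ ht
    rw [hK, Real.le_log_iff_exp_le (by linarith)]
    linarith [hup j t θ ht]
  set D := (∑ k, A j k * ∫ t, Sf (W k) t) - 2 * Real.pi * b j with hD
  have hD0 : 0 < D := by
    have := h.gt j
    linarith
  have hc := h.cont j
  have hPc := contDiff_Ph.continuous
  set M0 := Mf (W j) 0
  refine ⟨K + (4 * Real.pi * K + 2 * |M0| + 2 * D) / Real.pi, ?_⟩
  intro t θ ht
  have hG : ContDiff ℝ 2 (fun z => - W j z) := (h.smooth j).neg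
  have hm : ∀ t' < Real.log 1, 2 * Real.pi * (K - W j (t, θ)) ≤
      ∫ φ in (-Real.pi)..Real.pi, (fun y => K - W j y) ((t, θ) + Ph (t', φ)) := by
    intro t' ht'
    have h1 := mean_ineq hG (t, θ) (F := 0) one_pos (fun y _ => by
      rw [lap_neg, h.pde, neg_zero, neg_neg]
      exact Finset.sum_nonneg fun k _ => mul_nonneg (h.pos j k) (Real.exp_pos _).le) ht'
    simp only [mul_zero, zero_div, zero_mul, add_zero] at h1
    rw [intervalIntegral.integral_neg] at h1
    rw [intervalIntegral.integral_sub (by simp) ((by fun_prop : Continuous _).intervalIntegrable _ _),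
      intervalIntegral.integral_const, smul_eq_mul]
    linarith
  have hb := ball_int (h := fun y => K - W j y) (by fun_prop) (t, θ) one_pos (fun y hy => by
      have : dist y.1 t ≤ 1 := (le_max_left _ _).trans (Metric.mem_closedBall.1 hy)
      rw [Real.dist_eq, abs_le] at this
      have := hWK y.1 y.2 (by linarith)
      simpa using this) hm
  have hst := strip_le (h := fun y => K - W j y) (t := t) (θ := θ) (by fun_prop)
    (fun t θ => by rw [h.per]) (fun s φ hs => by
      have := hWK s φ (by linarith)
      simpa using this)
  have hIg : ∫ s in (t - 1)..(t + 1), ∫ φ in (-Real.pi)..Real.pi, (fun y => K - W j y) (s, φ) ≤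
      ∫ s in (t - 1)..(t + 1), (2 * Real.pi * K + |M0| + D * (t + 1)) := by
    apply intervalIntegral.integral_mono_on (by linarith)
    · refine Continuous.intervalIntegrable ?_ _ _
      exact intervalIntegral.continuous_parametric_intervalIntegral_of_continuous' (by fun_prop) _ _
    · simp
    · intro s hs
      rw [intervalIntegral.integral_sub (by simp) ((by fun_prop : Continuous _).intervalIntegrable _ _),
        intervalIntegral.integral_const, smul_eq_mul]
      have h1 := Mf_lower h j (s := s) (by linarith [hs.1])
      have h2 := neg_abs_le M0
      have h3 : D * s ≤ D * (t + 1) := mul_le_mul_of_nonneg_left hs.2 hD0.le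
      have h4 : Mf (W j) s = ∫ φ in (-Real.pi)..Real.pi, W j (s, φ) := rfl
      rw [← h4]
      linarith
  rw [intervalIntegral.integral_const, smul_eq_mul] at hIg
  have ht0 : 0 ≤ t := by linarith
  rw [abs_of_nonneg ht0]
  have h1 : Real.pi * (- W j (t, θ)) ≤ 4 * Real.pi * K + 2 * |M0| + 2 * D * (1 + t) := by
    have := mul_nonneg hpi.le hK0
    linarith
  have h2 : 4 * Real.pi * K + 2 * |M0| + 2 * D * (1 + t) ≤
      (4 * Real.pi * K + 2 * |M0| + 2 * D) * (1 + t) := by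
    have : 0 ≤ (4 * Real.pi * K + 2 * |M0|) * t := by positivity
    linarith
  have h3 : - W j (t, θ) ≤ (4 * Real.pi * K + 2 * |M0| + 2 * D) / Real.pi * (1 + t) := by
    rw [div_mul_eq_mul_div, le_div_iff₀ hpi]
    linarith
  have h5 : 0 ≤ (4 * Real.pi * K + 2 * |M0| + 2 * D) / Real.pi * (1 + t) := by positivity
  have h6 := hWK t θ (by linarith)
  have h7 : 0 ≤ K * t := by positivity
  rw [abs_le]
  constructor <;> nlinarith

theorem osc_mean {w : ℝ × ℝ → ℝ} (hc : Continuous w)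
    (hper : ∀ t θ, w (t, θ + 2 * Real.pi) = w (t, θ)) {t θ ε : ℝ}
    (h : ∀ θ', |θ - θ'| ≤ 2 * Real.pi → |w (t, θ) - w (t, θ')| ≤ ε) :
    |2 * Real.pi * w (t, θ) - Mf w t| ≤ 2 * Real.pi * ε := by
  have hpi := Real.pi_pos
  have hp : Function.Periodic (fun φ => w (t, φ)) (2 * Real.pi) := fun φ => hper t φ
  have e2 := hp.intervalIntegral_add_eq (-Real.pi) (θ - Real.pi)
  rw [show -Real.pi + 2 * Real.pi = Real.pi by ring, show θ - Real.pi + 2 * Real.pi = θ + Real.pi by ring] at e2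
  have e3 : 2 * Real.pi * w (t, θ) - Mf w t =
      ∫ φ in (θ - Real.pi)..(θ + Real.pi), (w (t, θ) - w (t, φ)) := by
    rw [intervalIntegral.integral_sub (by simp) ((by fun_prop : Continuous _).intervalIntegrable _ _),
      intervalIntegral.integral_const, smul_eq_mul, ← e2, Mf]
    ring
  rw [e3, ← Real.norm_eq_abs]
  refine (intervalIntegral.norm_integral_le_of_norm_le_const (C := ε) fun φ hφ => ?_).trans ?_
  · rw [uIoc_of_le (by linarith)] at hφ
    refine h φ ?_
    rw [abs_le]
    constructor <;> linarith [hφ.1, hφ.2]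
  · rw [show θ + Real.pi - (θ - Real.pi) = 2 * Real.pi by ring, abs_of_pos (by positivity), mul_comm]

theorem Cyl.exp1 (h : Cyl A b W) {T C : ℝ} (hT : 0 ≤ T) (hC : 0 ≤ C)
    (hup : ∀ k t θ, T ≤ t → Real.exp (W k (t, θ)) ≤ C) (j : Fin n) :
    ∃ κ > 0, ∃ T' C', 0 ≤ C' ∧ ∀ t θ, T' ≤ t → Real.exp (W j (t, θ)) ≤ C' * Real.exp (-κ * t) := by
  have hpi := Real.pi_pos
  obtain ⟨C1, hC1⟩ := h.growth hT hC hup j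
  obtain ⟨K, hK0, hK⟩ := osc_decay (h.smooth j) (h.per j) (T := T + 1) (F := (∑ k, A j k) * C)
    (δ := 0) (C := C1) le_rfl (by norm_num) (fun t θ ht => by
      simpa using h.lap_bound j (fun k => hup k t θ (by linarith))) hC1
  set D := (∑ k, A j k * ∫ t, Sf (W k) t) - 2 * Real.pi * b j with hD
  have hD0 : 0 < D := by
    have := h.gt j
    linarith
  obtain ⟨M', hM1, hM2⟩ := h.mean j
  have hev : ∀ᶠ t in Filter.atTop, (∑ k, A j k * ∫ s in Ioi t, Sf (W k) s) < D / 2 := by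
    have hgi : Integrable (fun t => ∑ k, A j k * Sf (W k) t) :=
      integrable_finsetSum _ fun k _ => (h.intS k).const_mul _
    filter_upwards [Ioi_small hgi (half_pos hD0)] with t ht
    rw [integral_finsetSum _ fun k _ => ((h.intS k).const_mul _).integrableOn] at ht
    simpa only [integral_const_mul] using ht
  obtain ⟨T2, hT2⟩ := Filter.eventually_atTop.1 hev
  have hd : ∀ t, HasDerivAt (fun t => Mf (W j) t + D / 2 * t) (M' t + D / 2) t := fun t =>
    (hM1 t).add (((hasDerivAt_id t).const_mul (D / 2)).congr_deriv (mul_one _))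
  have hanti : AntitoneOn (fun t => Mf (W j) t + D / 2 * t) (Ici T2) := by
    apply antitoneOn_of_deriv_nonpos (convex_Ici _)
    · exact fun t _ => (hd t).continuousAt.continuousWithinAt
    · exact fun t _ => (hd t).differentiableAt.differentiableWithinAt
    · intro t ht
      rw [interior_Ici] at ht
      rw [(hd t).deriv, hM2]
      have := hT2 t (le_of_lt ht)
      linarith
  set E := Mf (W j) T2 + D / 2 * T2
  refine ⟨D / (4 * Real.pi), by positivity, max T2 (T + 1), Real.exp (K + E / (2 * Real.pi)), (Real.exp_pos _).le, ?_⟩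
  intro t θ ht
  rw [← Real.exp_add, Real.exp_le_exp]
  have h1 := osc_mean (h.cont j) (h.per j) (t := t) (θ := θ) (ε := K) (fun θ' hθ => by
    simpa using hK t θ θ' ((le_max_right _ _).trans ht) hθ)
  have h2 : Mf (W j) t + D / 2 * t ≤ E := hanti self_mem_Ici ((le_max_left _ _).trans ht) ((le_max_left _ _).trans ht)
  have h3 := (abs_le.1 h1).2
  have h4 : W j (t, θ) ≤ (2 * Real.pi * K + (E - D / 2 * t)) / (2 * Real.pi) := by
    rw [le_div_iff₀ (by positivity)]
    linarith
  refine h4.trans (le_of_eq ?_)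
  field_simp
  ring

theorem Cyl.exp_all (h : Cyl A b W) : ∃ δ > 0, δ ≤ 1 / 2 ∧ ∃ T C, 0 ≤ T ∧ 0 ≤ C ∧
    ∀ k t θ, T ≤ t → Real.exp (W k (t, θ)) ≤ C * Real.exp (-δ * t) := by
  obtain ⟨T, C, hT, hC, hup⟩ := h.upper
  rcases isEmpty_or_nonempty (Fin n) with he | hne
  · exact ⟨1 / 2, by norm_num, le_rfl, 0, 0, le_rfl, le_rfl, fun k => he.elim k⟩
  choose κ hκ T' C' hC' hW using h.exp1 hT hC hup
  obtain ⟨k0, hk0⟩ := Finite.exists_min κ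
  refine ⟨min (κ k0) (1 / 2), lt_min (hκ k0) (by norm_num), min_le_right _ _, ∑ k, |T' k|, ∑ k, C' k,
    Finset.sum_nonneg fun _ _ => abs_nonneg _, Finset.sum_nonneg fun k _ => hC' k, ?_⟩
  intro k t θ ht
  have h1 := Finset.single_le_sum (f := fun k => |T' k|) (fun _ _ => abs_nonneg _) (Finset.mem_univ k)
  have h2 := Finset.single_le_sum (f := C') (fun k _ => hC' k) (Finset.mem_univ k)
  have h3 : T' k ≤ t := (le_abs_self _).trans (h1.trans ht)
  have ht0 : 0 ≤ t := (Finset.sum_nonneg fun _ _ => abs_nonneg _).trans ht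
  refine (hW k t θ h3).trans (mul_le_mul h2 (Real.exp_le_exp.2 ?_) (Real.exp_pos _).le ((hC' k).trans h2))
  have : min (κ k0) (1 / 2) ≤ κ k := (min_le_left _ _).trans (hk0 k)
  nlinarith

theorem lim_of_deriv {X X' : ℝ → ℝ} {T δ C : ℝ} (hδ : 0 < δ) (hX : ∀ t, HasDerivAt X (X' t) t)
    (h0 : ∀ t, T ≤ t → 0 ≤ X' t) (h1 : ∀ t, T ≤ t → X' t ≤ C * Real.exp (-δ * t)) :
    ∃ L, ∀ t, T ≤ t → |X t - L| ≤ C / δ * Real.exp (-δ * t) := by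
  have hC : 0 ≤ C := by
    have := (h0 T le_rfl).trans (h1 T le_rfl)
    exact nonneg_of_mul_nonneg_left this (Real.exp_pos _)
  have hmono : MonotoneOn X (Ici T) := by
    apply monotoneOn_of_deriv_nonneg (convex_Ici _)
    · exact fun t _ => (hX t).continuousAt.continuousWithinAt
    · exact fun t _ => (hX t).differentiableAt.differentiableWithinAt
    · intro t ht
      rw [interior_Ici] at ht
      rw [(hX t).deriv]
      exact h0 t (le_of_lt ht)
  have hd : ∀ t, HasDerivAt (fun t => X t + C / δ * Real.exp (-δ * t)) (X' t - C * Real.exp (-δ * t)) t := by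
    intro t
    have := (hX t).add ((((hasDerivAt_id t).const_mul (-δ)).exp).const_mul (C / δ))
    refine this.congr_deriv ?_
    simp
    field_simp
    ring
  have hanti : AntitoneOn (fun t => X t + C / δ * Real.exp (-δ * t)) (Ici T) := by
    apply antitoneOn_of_deriv_nonpos (convex_Ici _)
    · exact fun t _ => (hd t).continuousAt.continuousWithinAt
    · exact fun t _ => (hd t).differentiableAt.differentiableWithinAt
    · intro t ht
      rw [interior_Ici] at ht
      rw [(hd t).deriv]
      have := h1 t (le_of_lt ht)
      linarith
  have hub : ∀ t, T ≤ t → ∀ s, T ≤ s → X s ≤ X t + C / δ * Real.exp (-δ * t) := by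
    intro t ht s hs
    have hp : ∀ r, 0 ≤ C / δ * Real.exp (-δ * r) := fun r => by positivity
    rcases le_total s t with hst | hst
    · have := hmono (mem_Ici.2 hs) (mem_Ici.2 ht) hst
      linarith [hp t]
    · have := hanti (mem_Ici.2 ht) (mem_Ici.2 hs) hst
      simp only at this
      linarith [hp s]
  refine ⟨sSup (X '' Ici T), fun t ht => ?_⟩
  have hb : BddAbove (X '' Ici T) := ⟨X T + C / δ * Real.exp (-δ * T), by
    rintro _ ⟨s, hs, rfl⟩
    exact hub T le_rfl s hs⟩
  have h2 : X t ≤ sSup (X '' Ici T) := le_csSup hb ⟨t, ht, rfl⟩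
  have h3 : sSup (X '' Ici T) ≤ X t + C / δ * Real.exp (-δ * t) := by
    refine csSup_le ⟨_, T, self_mem_Ici, rfl⟩ ?_
    rintro _ ⟨s, hs, rfl⟩
    exact hub t ht s hs
  rw [abs_le]
  have : 0 ≤ C / δ * Real.exp (-δ * t) := by positivity
  constructor <;> linarith

end

section

variable {n : ℕ} {A : Matrix (Fin n) (Fin n) ℝ} {b : Fin n → ℝ} {W : Fin n → ℝ × ℝ → ℝ}

theorem Cyl.asym (h : Cyl A b W) {δ T C : ℝ} (hδ : 0 < δ) (hδ1 : δ ≤ 1 / 2) (hT : 0 ≤ T)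
    (hC : 0 ≤ C) (hup : ∀ k t θ, T ≤ t → Real.exp (W k (t, θ)) ≤ C * Real.exp (-δ * t))
    (j : Fin n) : ∃ c K, 0 < K ∧
      (∀ t θ, T + 1 ≤ t → |W j (t, θ) -
        ((b j - (∑ k, A j k * ∫ t, Sf (W k) t) / (2 * Real.pi)) * t + c)| ≤ K * Real.exp (-δ * t)) ∧
      (∀ t θ, T + 1 ≤ t → |lap (W j) (t, θ)| ≤ K * Real.exp (-δ * t)) := by
  have hpi := Real.pi_pos
  have hup0 : ∀ k t θ, T ≤ t → Real.exp (W k (t, θ)) ≤ C := by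
    intro k t θ ht
    refine (hup k t θ ht).trans ?_
    have : Real.exp (-δ * t) ≤ 1 := Real.exp_le_one_iff.2 (by nlinarith)
    nlinarith
  have ha : 0 ≤ ∑ k, A j k := Finset.sum_nonneg fun k _ => h.pos j k
  have hlap : ∀ t θ, T + 1 ≤ t → |lap (W j) (t, θ)| ≤ (∑ k, A j k) * C * Real.exp (-δ * t) := by
    intro t θ ht
    rw [mul_assoc]
    exact h.lap_bound j (fun k => hup k t θ (by linarith))
  obtain ⟨C1, hC1⟩ := h.growth hT hC hup0 j
  obtain ⟨K, hK0, hK⟩ := osc_decay (h.smooth j) (h.per j) (T := T + 1) (C := C1) hδ.le hδ1 hlap hC1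
  obtain ⟨M', hM1, hM2⟩ := h.mean j
  set μ := ∑ k, A j k * ∫ t, Sf (W k) t with hμ
  have hS : ∀ k t, T ≤ t → Sf (W k) t ≤ 2 * Real.pi * C * Real.exp (-δ * t) := by
    intro k t ht
    have hc := h.cont k
    have : Sf (W k) t ≤ ∫ θ in (-Real.pi)..Real.pi, C * Real.exp (-δ * t) := by
      apply intervalIntegral.integral_mono_on (by linarith)
      · exact (by fun_prop : Continuous _).intervalIntegrable _ _
      · simp
      · exact fun θ _ => hup k t θ ht
    rw [intervalIntegral.integral_const, smul_eq_mul] at this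
    linarith
  have hSi : ∀ k t, T ≤ t → ∫ s in Ioi t, Sf (W k) s ≤ 2 * Real.pi * C / δ * Real.exp (-δ * t) := by
    intro k t ht
    have h1 : ∫ s in Ioi t, Sf (W k) s ≤ ∫ s in Ioi t, 2 * Real.pi * C * Real.exp (-δ * s) := by
      refine setIntegral_mono_on (h.intS k).integrableOn ?_ measurableSet_Ioi ?_
      · exact (integrableOn_exp_mul_Ioi (by linarith) t).const_mul _
      · exact fun s hs => hS k s (ht.trans (le_of_lt hs))
    rw [integral_const_mul, integral_exp_mul_Ioi (by linarith)] at h1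
    refine h1.trans (le_of_eq ?_)
    field_simp
  have hd : ∀ t, HasDerivAt (fun t => Mf (W j) t - (2 * Real.pi * b j - μ) * t)
      (∑ k, A j k * ∫ s in Ioi t, Sf (W k) s) t := fun t =>
    ((hM1 t).sub ((hasDerivAt_id t).const_mul (2 * Real.pi * b j - μ))).congr_deriv (by rw [hM2]; ring)
  obtain ⟨L, hL⟩ := lim_of_deriv (T := T) (C := (∑ k, A j k) * (2 * Real.pi * C / δ)) hδ hd
    (fun t _ => Finset.sum_nonneg fun k _ => mul_nonneg (h.pos j k)
        (setIntegral_nonneg measurableSet_Ioi fun s _ => Sf_nonneg _ _))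
    (fun t ht => by
      rw [mul_assoc, Finset.sum_mul]
      exact Finset.sum_le_sum fun k _ => mul_le_mul_of_nonneg_left (hSi k t ht) (h.pos _ _))
  set C2 := (∑ k, A j k) * (2 * Real.pi * C / δ) / δ with hC2
  have hC20 : 0 ≤ C2 := by positivity
  refine ⟨L / (2 * Real.pi), K + C2 / (2 * Real.pi) + (∑ k, A j k) * C + 1, by positivity, ?_, ?_⟩
  · intro t θ ht
    have h1 := osc_mean (h.cont j) (h.per j) (t := t) (θ := θ) (fun θ' hθ => hK t θ θ' ht hθ)
    have h2 := hL t (by linarith)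
    have e : W j (t, θ) - ((b j - μ / (2 * Real.pi)) * t + L / (2 * Real.pi)) =
        ((2 * Real.pi * W j (t, θ) - Mf (W j) t) +
          (Mf (W j) t - (2 * Real.pi * b j - μ) * t - L)) / (2 * Real.pi) := by
      field_simp
      ring
    rw [e, abs_div, abs_of_pos (show 0 < 2 * Real.pi by positivity), div_le_iff₀ (by positivity)]
    refine (abs_add_le _ _).trans ((add_le_add h1 h2).trans ?_)
    have e2 : 2 * Real.pi * (K * Real.exp (-δ * t)) + C2 * Real.exp (-δ * t) =
        (K + C2 / (2 * Real.pi)) * Real.exp (-δ * t) * (2 * Real.pi) := by field_simp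
    rw [e2]
    have : 0 ≤ (∑ k, A j k) * C := by positivity
    refine mul_le_mul_of_nonneg_right (mul_le_mul_of_nonneg_right ?_ (Real.exp_pos _).le) (by positivity)
    linarith
  · intro t θ ht
    refine (hlap t θ ht).trans ?_
    gcongr
    have : 0 ≤ C2 / (2 * Real.pi) := by positivity
    linarith

theorem lap_affine (a c : ℝ) (z : ℝ × ℝ) : lap (fun z => a * z.1 + c) z = 0 := by
  have h : deriv (fun s : ℝ => a * s + c) = fun _ => a := by
    funext s
    simp
  simp [lap, h]

theorem deriv_fst {H : ℝ × ℝ → ℝ} (hH : ContDiff ℝ 2 H) (t θ : ℝ) :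
    HasDerivAt (fun s => H (s, θ)) (fderiv ℝ H (t, θ) (1, 0)) t := by
  have h1 : HasFDerivAt H (fderiv ℝ H (t, θ)) (t, θ) :=
    (hH.differentiable (by norm_num) _).hasFDerivAt
  exact h1.comp_hasDerivAt t ((hasDerivAt_id t).prodMk (hasDerivAt_const t θ))

theorem deriv_snd {H : ℝ × ℝ → ℝ} (hH : ContDiff ℝ 2 H) (t θ : ℝ) :
    HasDerivAt (fun s => H (t, s)) (fderiv ℝ H (t, θ) (0, 1)) θ := by
  have h1 : HasFDerivAt H (fderiv ℝ H (t, θ)) (t, θ) :=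
    (hH.differentiable (by norm_num) _).hasFDerivAt
  exact h1.comp_hasDerivAt θ ((hasDerivAt_const θ t).prodMk (hasDerivAt_id θ))

theorem grad_bounds {H : ℝ × ℝ → ℝ} (hH : ContDiff ℝ 2 H) {a c δ K T : ℝ} (hδ : 0 < δ) (hK : 0 < K)
    (h1 : ∀ t θ, T ≤ t → |H (t, θ) - (a * t + c)| ≤ K * Real.exp (-δ * t))
    (h2 : ∀ t θ, T ≤ t → |lap H (t, θ)| ≤ K * Real.exp (-δ * t)) :
    ∀ t θ, T + 1 ≤ t →
      |fderiv ℝ H (t, θ) (1, 0) - a| ≤ 4 * (K * Real.exp δ) * Real.exp (-δ * t) ∧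
      |fderiv ℝ H (t, θ) (0, 1)| ≤ 4 * (K * Real.exp δ) * Real.exp (-δ * t) := by
  intro t θ ht
  have haff : ContDiff ℝ 2 (fun z : ℝ × ℝ => a * z.1 + c) := by fun_prop
  have hG : ContDiff ℝ 2 (fun z => H z - (a * z.1 + c)) := hH.sub haff
  have hle : ∀ x : ℝ, |x| ≤ 1 → K * Real.exp (-δ * (t + x)) ≤ K * Real.exp δ * Real.exp (-δ * t) := by
    intro x hx
    rw [mul_assoc, ← Real.exp_add]
    gcongr
    nlinarith [(abs_le.1 hx).1]
  have g1 : ∀ x y : ℝ, |x| ≤ 1 → |y| ≤ 1 →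
      |(fun z : ℝ × ℝ => H z - (a * z.1 + c)) (t + x, θ + y)| ≤ K * Real.exp δ * Real.exp (-δ * t) :=
    fun x y hx _ => (h1 _ _ (by linarith [(abs_le.1 hx).1])).trans (hle x hx)
  have g2 : ∀ x y : ℝ, |x| ≤ 1 → |y| ≤ 1 →
      |lap (fun z : ℝ × ℝ => H z - (a * z.1 + c)) (t + x, θ + y)| ≤ K * Real.exp δ * Real.exp (-δ * t) := by
    intro x y hx _
    rw [lap_sub hH haff, lap_affine, sub_zero]
    exact (h2 _ _ (by linarith [(abs_le.1 hx).1])).trans (hle x hx)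
  have hx := grad_x hG (by positivity) g1 g2
  have hy := grad_y hG (by positivity) g1 g2
  have d1 : HasDerivAt (fun s => (fun z : ℝ × ℝ => H z - (a * z.1 + c)) (s, θ))
      (fderiv ℝ H (t, θ) (1, 0) - a) t :=
    ((deriv_fst hH t θ).sub (((hasDerivAt_id t).const_mul a).add_const c)).congr_deriv (by simp)
  have d2 : HasDerivAt (fun s => (fun z : ℝ × ℝ => H z - (a * z.1 + c)) (t, s))
      (fderiv ℝ H (t, θ) (0, 1)) θ :=
    ((deriv_snd hH t θ).sub_const (a * t + c))
  rw [d1.deriv] at hx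
  rw [d2.deriv] at hy
  constructor <;> linarith

theorem cpt_bound {f : ℝ × ℝ → ℝ} (hf : Continuous f) {T δ K : ℝ}
    (h : ∀ t θ, T ≤ t → |f (t, θ)| ≤ K * Real.exp (-δ * t)) :
    ∃ C, ∀ t, 0 ≤ t → ∀ θ ∈ Icc (-Real.pi) Real.pi, |f (t, θ)| ≤ C * Real.exp (-δ * t) := by
  obtain ⟨C, hC⟩ := (isCompact_Icc.prod isCompact_Icc).exists_bound_of_continuousOn
    (s := Icc 0 T ×ˢ Icc (-Real.pi) Real.pi) (f := fun z => f z * Real.exp (δ * z.1))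
    (by fun_prop)
  refine ⟨max C K, fun t ht θ hθ => ?_⟩
  rcases le_total T t with h1 | h1
  · refine (h t θ h1).trans ?_
    gcongr
    exact le_max_right _ _
  · have := hC (t, θ) ⟨⟨ht, h1⟩, hθ⟩
    rw [norm_mul, Real.norm_eq_abs, Real.norm_eq_abs, abs_of_pos (Real.exp_pos _)] at this
    have h2 : |f (t, θ)| ≤ C * Real.exp (-δ * t) := by
      rw [neg_mul, Real.exp_neg, ← div_eq_mul_inv, le_div_iff₀ (Real.exp_pos _)]
      exact this
    refine h2.trans ?_
    gcongr
    exact le_max_left _ _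

theorem Cyl.final (h : Cyl A b W) : ∃ δ > 0, ∀ j, ∃ c C, ∀ t, 0 ≤ t → ∀ θ ∈ Icc (-Real.pi) Real.pi,
      |W j (t, θ) - ((b j - (∑ k, A j k * ∫ t, Sf (W k) t) / (2 * Real.pi)) * t + c)| ≤
        C * Real.exp (-δ * t) ∧
      |fderiv ℝ (W j) (t, θ) (1, 0) - (b j - (∑ k, A j k * ∫ t, Sf (W k) t) / (2 * Real.pi))| ≤
        C * Real.exp (-δ * t) ∧
      |fderiv ℝ (W j) (t, θ) (0, 1)| ≤ C * Real.exp (-δ * t) := by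
  obtain ⟨δ, hδ, hδ1, T, C, hT, hC, hup⟩ := h.exp_all
  refine ⟨δ, hδ, fun j => ?_⟩
  obtain ⟨c, K, hK, h1, h2⟩ := h.asym hδ hδ1 hT hC hup j
  set a := b j - (∑ k, A j k * ∫ t, Sf (W k) t) / (2 * Real.pi)
  have hg := grad_bounds (h.smooth j) hδ hK h1 h2
  have hc := h.cont j
  have hfc : Continuous (fderiv ℝ (W j)) := (h.smooth j).continuous_fderiv (by norm_num)
  obtain ⟨C1, hC1⟩ := cpt_bound (f := fun z => W j z - (a * z.1 + c)) (by fun_prop) h1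
  obtain ⟨C2, hC2⟩ := cpt_bound (f := fun z => fderiv ℝ (W j) z (1, 0) - a) (by fun_prop)
    (fun t θ ht => (hg t θ ht).1)
  obtain ⟨C3, hC3⟩ := cpt_bound (f := fun z => fderiv ℝ (W j) z (0, 1)) (by fun_prop)
    (fun t θ ht => (hg t θ ht).2)
  refine ⟨c, max C1 (max C2 C3), fun t ht θ hθ => ⟨(hC1 t ht θ hθ).trans ?_,
    (hC2 t ht θ hθ).trans ?_, (hC3 t ht θ hθ).trans ?_⟩⟩
  all_goals
    gcongr
    simp

end

/-- The log-polar transform of a solution. -/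
noncomputable def Wt {n : ℕ} (β : Fin n → ℝ) (u : Fin n → ℝ × ℝ → ℝ) (j : Fin n) (z : ℝ × ℝ) : ℝ :=
  u j (Ph z) + (β j + 2) * z.1

theorem Ph_ne (z : ℝ × ℝ) : Ph z ≠ 0 := by
  intro h
  have h1 := nrm_Ph z
  rw [h] at h1
  simp [nrm] at h1
  exact (Real.exp_pos z.1).ne h1

theorem exp_Wt {n : ℕ} (β : Fin n → ℝ) (u : Fin n → ℝ × ℝ → ℝ) (j : Fin n) (z : ℝ × ℝ) :
    Real.exp (Wt β u j z) = Real.exp (2 * z.1) * (nrm (Ph z) ^ β j * Real.exp (u j (Ph z))) := by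
  rw [nrm_Ph, ← Real.exp_mul, ← Real.exp_add, ← Real.exp_add, Wt]
  ring_nf

theorem cyl_of_sol {n : ℕ} {A : Matrix (Fin n) (Fin n) ℝ} {β : Fin n → ℝ}
    (hA : H1 A) {u : Fin n → ℝ × ℝ → ℝ} (hu : PDESolution A β u) :
    Cyl A (fun j => β j + 2) (Wt β u) ∧
      ∀ k, ∫ t, Sf (Wt β u k) t = 2 * Real.pi * energyPDE β u k := by
  have hpi := Real.pi_pos
  obtain ⟨hc, hs, hp, hi⟩ := hu
  have hSf : ∀ k t, ∫ θ in (-Real.pi)..Real.pi, Real.exp (Wt β u k (t, θ)) =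
      ∫ θ in (-Real.pi)..Real.pi, Real.exp (2 * t) *
        (fun x => nrm x ^ β k * Real.exp (u k x)) (Ph (t, θ)) := by
    intro k t
    simp only [exp_Wt]
  have hsm : ∀ j, ContDiff ℝ 2 (fun z => u j (0 + Ph z)) := by
    intro j
    rw [contDiff_iff_contDiffAt]
    intro z
    simp only [zero_add]
    exact (hs j (Ph z) (Ph_ne z)).comp z contDiff_Ph.contDiffAt
  have haff : ∀ j, ContDiff ℝ 2 (fun z : ℝ × ℝ => -(β j + 2) * z.1 + 0) := fun j => by fun_prop
  have hW : ∀ j, Wt β u j = fun z => u j (0 + Ph z) - (-(β j + 2) * z.1 + 0) := by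
    intro j
    funext z
    simp only [Wt, zero_add]
    ring
  refine ⟨⟨?_, ?_, hA.2.1, ?_, ?_, ?_⟩, ?_⟩
  · intro j
    rw [hW]
    exact (hsm j).sub (haff j)
  · intro j t θ
    simp only [Wt, Ph_periodic]
  · intro j z
    rw [hW, lap_sub (hsm j) (haff j), lap_affine, sub_zero, lap_Ph 0 z (by
      rw [zero_add]; exact hs j _ (Ph_ne z)), zero_add]
    have := hp j (Ph z) (Ph_ne z)
    rw [eq_neg_of_add_eq_zero_left this, mul_neg, Finset.mul_sum]
    congr 1
    refine Finset.sum_congr rfl fun k _ => ?_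
    rw [exp_Wt]
    ring
  · intro k
    simp only [hSf]
    exact (cov (hi k)).1
  · intro j
    obtain ⟨C, hC⟩ := (isCompact_closedBall (0 : ℝ × ℝ) 1).exists_bound_of_continuousOn
      (hc j).continuousOn
    refine ⟨C, fun t ht θ => ?_⟩
    have : Wt β u j (t, θ) - (β j + 2) * t = u j (Ph (t, θ)) := by simp [Wt]
    rw [this]
    refine hC _ ?_
    rw [mem_closedBall_zero_iff]
    refine (norm_le_nrm _).trans ?_
    rw [nrm_Ph]
    exact Real.exp_le_one_iff.2 ht
  · intro k
    have := (cov (hi k)).2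
    simp only [Sf, hSf, this, energyPDE]
    field_simp

theorem exists_Ph {x : ℝ × ℝ} (hx : 0 < nrm x) :
    ∃ θ ∈ Icc (-Real.pi) Real.pi, x = Ph (Real.log (nrm x), θ) := by
  have hn : ‖(⟨x.1, x.2⟩ : ℂ)‖ = nrm x := by
    rw [Complex.norm_eq_sqrt_sq_add_sq, nrm]
  refine ⟨Complex.arg ⟨x.1, x.2⟩, ⟨(Complex.neg_pi_lt_arg _).le, Complex.arg_le_pi _⟩, ?_⟩
  rw [Ph_mk, Real.exp_log hx, ← hn, Complex.norm_mul_cos_arg, Complex.norm_mul_sin_arg]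

theorem rot_bound {c s P Q E : ℝ} (hc : |c| ≤ 1) (hs : |s| ≤ 1) (hP : |P| ≤ E) (hQ : |Q| ≤ E) :
    |c * P + s * Q| ≤ 2 * E := by
  refine (abs_add_le _ _).trans ?_
  rw [abs_mul, abs_mul]
  nlinarith [abs_nonneg P, abs_nonneg Q, abs_nonneg c, abs_nonneg s]

theorem asymptotic_behavior_of_solutions {n : ℕ} (hn : 0 < n)
    (A : Matrix (Fin n) (Fin n) ℝ) (β : Fin n → ℝ)
    (hA : H1 A) (hβ : ∀ i, -2 < β i)
    (u : Fin n → ℝ × ℝ → ℝ) (hu : PDESolution A β u) :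
    (∀ i, 2 + β i < ∑ j, A i j * energyPDE β u j) ∧
    ∃ c : Fin n → ℝ, ∃ δ > (0:ℝ), ∃ C : ℝ,
      ∀ i, ∀ x : ℝ × ℝ, 1 < nrm x →
        |u i x - (-(∑ j, A i j * energyPDE β u j) * Real.log (nrm x) + c i)|
            ≤ C * nrm x ^ (-δ) ∧
        |deriv (fun s => u i (s, x.2)) x.1 - (-(∑ j, A i j * energyPDE β u j) * x.1 / nrm x ^ 2)|
            ≤ C * nrm x ^ (-δ - 1) ∧
        |deriv (fun t => u i (x.1, t)) x.2 - (-(∑ j, A i j * energyPDE β u j) * x.2 / nrm x ^ 2)|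
            ≤ C * nrm x ^ (-δ - 1) := by
  have hpi := Real.pi_pos
  obtain ⟨hcyl, hen⟩ := cyl_of_sol hA hu
  have hmu : ∀ i, ∑ k, A i k * ∫ t, Sf (Wt β u k) t =
      2 * Real.pi * ∑ j, A i j * energyPDE β u j := by
    intro i
    rw [Finset.mul_sum]
    refine Finset.sum_congr rfl fun k _ => ?_
    rw [hen]
    ring
  refine ⟨fun i => ?_, ?_⟩
  · have := hcyl.gt i
    rw [hmu] at this
    have := lt_of_mul_lt_mul_left this (by positivity)
    linarith
  obtain ⟨δ, hδ, hfin⟩ := hcyl.final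
  choose c C hCW using hfin
  refine ⟨c, δ, hδ, ∑ j, 2 * |C j|, ?_⟩
  intro i x hx
  have hCi : 2 * |C i| ≤ ∑ j, 2 * |C j| :=
    Finset.single_le_sum (f := fun j => 2 * |C j|) (fun _ _ => by positivity) (Finset.mem_univ i)
  obtain ⟨θ, hθ, hxP⟩ := exists_Ph (show 0 < nrm x by linarith)
  set t := Real.log (nrm x) with ht
  have ht0 : 0 ≤ t := Real.log_nonneg hx.le
  have hnt : nrm x = Real.exp t := (Real.exp_log (by linarith)).symm
  set m := ∑ j, A i j * energyPDE β u j with hm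
  obtain ⟨h1, h2, h3⟩ := hCW i t ht0 θ hθ
  rw [hmu, ← hm, mul_div_cancel_left₀ _ (by positivity)] at h1 h2
  have hE := Real.exp_pos t
  have e1 : nrm x ^ (-δ) = Real.exp (-δ * t) := by
    rw [hnt, ← Real.exp_mul, mul_comm]
  have e2 : nrm x ^ (-δ - 1) = Real.exp (-δ * t) * (Real.exp t)⁻¹ := by
    rw [hnt, ← Real.exp_mul, ← Real.exp_neg, ← Real.exp_add]
    ring_nf
  have hx1 : x.1 = Real.exp t * Real.cos θ := by rw [hxP, Ph_mk]
  have hx2 : x.2 = Real.exp t * Real.sin θ := by rw [hxP, Ph_mk]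
  have hx0 : x ≠ 0 := hxP ▸ Ph_ne _
  have hdiff : DifferentiableAt ℝ (u i) x := (hu.2.1 i x hx0).differentiableAt (by norm_num)
  have hF := hdiff.hasFDerivAt
  set Lf := fderiv ℝ (u i) x with hLf
  set p := Lf (1, 0) with hp
  set q := Lf (0, 1) with hq
  have d1 : deriv (fun s => u i (s, x.2)) x.1 = p :=
    (HasFDerivAt.comp_hasDerivAt (l := u i) x.1 hF
      ((hasDerivAt_id x.1).prodMk (hasDerivAt_const x.1 x.2))).deriv
  have d2 : deriv (fun s => u i (x.1, s)) x.2 = q :=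
    (HasFDerivAt.comp_hasDerivAt (l := u i) x.2 hF
      ((hasDerivAt_const x.2 x.1).prodMk (hasDerivAt_id x.2))).deriv
  have hlin : ∀ a b : ℝ, Lf (a, b) = a * p + b * q := by
    intro a b
    have : ((a, b) : ℝ × ℝ) = a • ((1, 0) : ℝ × ℝ) + b • ((0, 1) : ℝ × ℝ) := by simp
    rw [this, map_add, map_smul, map_smul, smul_eq_mul, smul_eq_mul]
  have hF' : HasFDerivAt (u i) Lf (Ph (t, θ)) := hxP ▸ hF
  have w1 : fderiv ℝ (Wt β u i) (t, θ) (1, 0) =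
      Real.exp t * Real.cos θ * p + Real.exp t * Real.sin θ * q + (β i + 2) := by
    refine (deriv_fst (hcyl.smooth i) t θ).unique ?_
    have a2 : HasDerivAt (fun s => Ph (s, θ)) (Real.exp t * Real.cos θ, Real.exp t * Real.sin θ) t := by
      simp only [Ph_mk]
      exact (((Real.hasDerivAt_exp t).mul_const _).prodMk ((Real.hasDerivAt_exp t).mul_const _))
    have := (hF'.comp_hasDerivAt t a2).add ((hasDerivAt_id t).const_mul (β i + 2))
    rw [hlin, mul_one] at this
    exact this
  have w2 : fderiv ℝ (Wt β u i) (t, θ) (0, 1) =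
      Real.exp t * -Real.sin θ * p + Real.exp t * Real.cos θ * q := by
    refine (deriv_snd (hcyl.smooth i) t θ).unique ?_
    have b1 : HasDerivAt (fun s => Ph (t, s)) (Real.exp t * -Real.sin θ, Real.exp t * Real.cos θ) θ := by
      simp only [Ph_mk]
      exact (((Real.hasDerivAt_cos θ).const_mul _).prodMk ((Real.hasDerivAt_sin θ).const_mul _))
    have := (hF'.comp_hasDerivAt θ b1).add_const ((β i + 2) * t)
    rw [hlin] at this
    exact this
  rw [w1] at h2
  rw [w2] at h3
  have hsc := Real.sin_sq_add_cos_sq θ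
  have hpos := Real.exp_pos (-δ * t)
  have habs : ∀ {y : ℝ}, y ≤ C i * Real.exp (-δ * t) → y ≤ |C i| * Real.exp (-δ * t) := fun {y} hy =>
    hy.trans (mul_le_mul_of_nonneg_right (le_abs_self _) hpos.le)
  have hfinish : ∀ {y : ℝ}, |Real.exp t * y| ≤ 2 * (|C i| * Real.exp (-δ * t)) →
      |y| ≤ (∑ j, 2 * |C j|) * (Real.exp (-δ * t) * (Real.exp t)⁻¹) := by
    intro y hy
    rw [abs_mul, abs_of_pos hE] at hy
    rw [← mul_assoc, ← div_eq_mul_inv, le_div_iff₀ hE]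
    have := mul_le_mul_of_nonneg_right hCi hpos.le
    linarith
  rw [d1, d2, e1, e2]
  refine ⟨?_, hfinish ?_, hfinish ?_⟩
  · have hu1 : Wt β u i (t, θ) = u i x + (β i + 2) * t := by rw [Wt, ← hxP]
    rw [hu1] at h1
    have e3 : u i x + (β i + 2) * t - ((β i + 2 - m) * t + c i) = u i x - (-m * t + c i) := by ring
    rw [e3] at h1
    refine (habs h1).trans (mul_le_mul_of_nonneg_right ?_ hpos.le)
    linarith [abs_nonneg (C i)]
  · have hr := rot_bound (Real.abs_cos_le_one θ) (s := -Real.sin θ) (by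
      rw [abs_neg]; exact Real.abs_sin_le_one θ) (habs h2) (habs h3)
    refine le_trans (le_of_eq ?_) hr
    congr 1
    rw [hx1, hnt]
    field_simp
    linear_combination (-(Real.exp t * p)) * hsc
  · have hr := rot_bound (Real.abs_sin_le_one θ) (Real.abs_cos_le_one θ) (habs h2) (habs h3)
    refine le_trans (le_of_eq ?_) hr
    congr 1
    rw [hx2, hnt]
    field_simp
    linear_combination (-(Real.exp t * q)) * hsc
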